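/- arXiv:1503.06434 — 2 statements merged into one kernel-verified Lean document; each statement's English description precedes it below -/
import Mathlib

section
/- Let P be a smooth Fano n-polytope with n+3 vertices. Suppose there exist integers a ≥ 2 and b ≥ 2 with n = a + 2b − 1 and a labeling V(P) = {v_1, …, v_a, y_1, …, y_b, z, t, u_1, …, u_b} of the vertices of P such that the primitive relations of P are exactly: v_1+⋯+v_a+y_1+⋯+y_b = (a+b−1)t; y_1+⋯+y_b+z = u_1+⋯+u_b; z+t = 0; t+u_1+⋯+u_b = y_1+⋯+y_b; and u_1+⋯+u_b+v_1+⋯+v_a = (a+b−2)t. Then P is I-isolated. -/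
/-! ## Basic definitions: lattice polytopes, smooth Fano polytopes,
unimodular equivalence, F- and I-equivalence, primitive collections. -/

/-- A point of `ℝ^n` all of whose coordinates are integers. -/
def IsLatticePoint {n : ℕ} (x : Fin n → ℝ) : Prop := ∀ i, ∃ m : ℤ, x i = (m : ℝ)

/-- The vertex set of a polytope: its extreme points. -/
def vertexSet {n : ℕ} (P : Set (Fin n → ℝ)) : Set (Fin n → ℝ) :=
  Set.extremePoints ℝ P

/-- A lattice `n`-polytope: the convex hull of finitely many lattice points,
of full dimension `n`. -/
def IsLatticePolytope {n : ℕ} (P : Set (Fin n → ℝ)) : Prop :=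
  (∃ S : Finset (Fin n → ℝ), (∀ x ∈ S, IsLatticePoint x) ∧
    P = convexHull ℝ (S : Set (Fin n → ℝ))) ∧
  affineSpan ℝ P = ⊤

/-- A face of `P`: an exposed subset of `P`. -/
def IsFaceOf {n : ℕ} (F P : Set (Fin n → ℝ)) : Prop := IsExposed ℝ P F

/-- A facet of `P`: a face of affine dimension `n - 1`. -/
def IsFacetOf {n : ℕ} (F P : Set (Fin n → ℝ)) : Prop :=
  IsFaceOf F P ∧ Module.finrank ℝ (vectorSpan ℝ F) + 1 = n

/-- A set `S` of points of `ℝ^n` forms a `ℤ`-basis of `ℤ^n`: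
it consists of `n` lattice points whose matrix has determinant `±1`. -/
def IsUnimodularBasis {n : ℕ} (S : Set (Fin n → ℝ)) : Prop :=
  ∃ b : Fin n → (Fin n → ℝ), Function.Injective b ∧ Set.range b = S ∧
    (∀ i, IsLatticePoint (b i)) ∧ |(Matrix.of b).det| = 1

/-- A smooth Fano `n`-polytope: a lattice `n`-polytope with the origin in its
interior such that the vertex set of every facet is a `ℤ`-basis of `ℤ^n`. -/
def IsSmoothFano {n : ℕ} (P : Set (Fin n → ℝ)) : Prop :=
  IsLatticePolytope P ∧ (0 : Fin n → ℝ) ∈ interior P ∧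
    ∀ F : Set (Fin n → ℝ), IsFacetOf F P → IsUnimodularBasis (vertexSet P ∩ F)

/-- Two subsets of `ℝ^n` are unimodularly equivalent if an affine map of `ℝ^n`
mapping `ℤ^n` onto `ℤ^n` maps one onto the other. -/
def UnimodularEquiv {n : ℕ} (Q Q' : Set (Fin n → ℝ)) : Prop :=
  ∃ φ : (Fin n → ℝ) →ᵃ[ℝ] (Fin n → ℝ),
    φ '' {x | IsLatticePoint x} = {x | IsLatticePoint x} ∧ φ '' Q = Q'

/-- One step of an I-sequence: the vertex set of one polytope is obtained from
the vertex set of the other by adding one new lattice point. -/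
def IStep {n : ℕ} (P Q : Set (Fin n → ℝ)) : Prop :=
  (∃ w : Fin n → ℝ, IsLatticePoint w ∧ w ∉ vertexSet P ∧
    vertexSet Q = vertexSet P ∪ {w}) ∨
  (∃ w : Fin n → ℝ, IsLatticePoint w ∧ w ∉ vertexSet Q ∧
    vertexSet P = vertexSet Q ∪ {w})

/-- I-equivalence of smooth Fano `n`-polytopes. -/
def IEquiv {n : ℕ} (P Q : Set (Fin n → ℝ)) : Prop :=
  ∃ (k : ℕ) (c : Fin (k + 1) → Set (Fin n → ℝ)),
    (∀ i, IsSmoothFano (c i)) ∧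
    UnimodularEquiv P (c 0) ∧ UnimodularEquiv Q (c (Fin.last k)) ∧
    ∀ i : Fin k, IStep (c i.castSucc) (c i.succ)

/-- `Q` is the stellar subdivision of `P` at the new vertex `w`: `w` is the sum
of the vertices of a proper face `F` of `P`, and the facets of `Q` containing
`w` are exactly the sets `conv({w} ∪ (V(F') \ {v}))` for `F'` a facet of `P`
containing `F` and `v` a vertex of `F`. -/
def IsStellarSubdivisionAt {n : ℕ} (P Q : Set (Fin n → ℝ)) (w : Fin n → ℝ) : Prop :=
  ∃ F : Set (Fin n → ℝ), IsFaceOf F P ∧ F.Nonempty ∧ F ≠ P ∧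
    w = ∑ᶠ v ∈ vertexSet P ∩ F, v ∧
    {G : Set (Fin n → ℝ) | IsFacetOf G Q ∧ w ∈ G} =
      {G : Set (Fin n → ℝ) | ∃ F' v, IsFacetOf F' P ∧ F ⊆ F' ∧
        v ∈ vertexSet P ∩ F ∧
        G = convexHull ℝ (insert w ((vertexSet P ∩ F') \ {v}))}

/-- One step of an F-sequence: an I-step which moreover is a stellar
subdivision (or its inverse). -/
def FStep {n : ℕ} (P Q : Set (Fin n → ℝ)) : Prop :=
  (∃ w : Fin n → ℝ, IsLatticePoint w ∧ w ∉ vertexSet P ∧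
    vertexSet Q = vertexSet P ∪ {w} ∧ IsStellarSubdivisionAt P Q w) ∨
  (∃ w : Fin n → ℝ, IsLatticePoint w ∧ w ∉ vertexSet Q ∧
    vertexSet P = vertexSet Q ∪ {w} ∧ IsStellarSubdivisionAt Q P w)

/-- F-equivalence of smooth Fano `n`-polytopes. -/
def FEquiv {n : ℕ} (P Q : Set (Fin n → ℝ)) : Prop :=
  ∃ (k : ℕ) (c : Fin (k + 1) → Set (Fin n → ℝ)),
    (∀ i, IsSmoothFano (c i)) ∧
    UnimodularEquiv P (c 0) ∧ UnimodularEquiv Q (c (Fin.last k)) ∧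
    ∀ i : Fin k, FStep (c i.castSucc) (c i.succ)

/-- A smooth Fano polytope is F-isolated if every smooth Fano polytope
F-equivalent to it is unimodularly equivalent to it. -/
def FIsolated {n : ℕ} (P : Set (Fin n → ℝ)) : Prop :=
  ∀ Q : Set (Fin n → ℝ), IsSmoothFano Q → FEquiv Q P → UnimodularEquiv Q P

/-- A smooth Fano polytope is I-isolated if every smooth Fano polytope
I-equivalent to it is unimodularly equivalent to it. -/
def IIsolated {n : ℕ} (P : Set (Fin n → ℝ)) : Prop :=
  ∀ Q : Set (Fin n → ℝ), IsSmoothFano Q → IEquiv Q P → UnimodularEquiv Q P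

/-- A primitive collection of a smooth Fano polytope `P`: a nonempty set `A` of
vertices such that `conv(A)` is not a face of `P` but `conv(A \ {x})` is a face
of `P` for every `x ∈ A`. -/
def IsPrimitiveCollection {n : ℕ} (P A : Set (Fin n → ℝ)) : Prop :=
  A.Nonempty ∧ A ⊆ vertexSet P ∧ ¬ IsFaceOf (convexHull ℝ A) P ∧
    ∀ x ∈ A, IsFaceOf (convexHull ℝ (A \ {x})) P

/-- The standard basis vector `e_i` of `ℝ^n`. -/
def stdBasis {n : ℕ} (i : Fin n) : Fin n → ℝ := fun q => if q = i then 1 else 0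

/-- The polytope `T^n = conv{e_1, …, e_n, -(e_1 + ⋯ + e_n)}`,
corresponding to projective `n`-space. -/
def Tpoly (n : ℕ) : Set (Fin n → ℝ) :=
  convexHull ℝ (Set.range (stdBasis (n := n)) ∪ {fun _ => (-1 : ℝ)})

/-- `P` has the vertex labeling `v_1, …, v_a, y_1, …, y_b, z, t, u_1, …, u_b`
and its primitive collections and primitive relations are exactly:
`v_1+⋯+v_a+y_1+⋯+y_b = (a+b-1)t`; `y_1+⋯+y_b+z = u_1+⋯+u_b`; `z+t = 0`;
`t+u_1+⋯+u_b = y_1+⋯+y_b`; `u_1+⋯+u_b+v_1+⋯+v_a = (a+b-2)t`. -/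
def HasIsolatedStructure {n : ℕ} (P : Set (Fin n → ℝ)) (a b : ℕ)
    (v : Fin a → Fin n → ℝ) (y : Fin b → Fin n → ℝ) (z t : Fin n → ℝ)
    (u : Fin b → Fin n → ℝ) : Prop :=
  vertexSet P = Set.range v ∪ Set.range y ∪ {z, t} ∪ Set.range u ∧
  (∀ A : Set (Fin n → ℝ), IsPrimitiveCollection P A ↔
    (A = Set.range v ∪ Set.range y ∨ A = Set.range y ∪ {z} ∨ A = {z, t} ∨
     A = insert t (Set.range u) ∨ A = Set.range u ∪ Set.range v)) ∧
  (∑ i, v i) + (∑ j, y j) = ((a : ℝ) + (b : ℝ) - 1) • t ∧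
  (∑ j, y j) + z = (∑ j, u j) ∧
  z + t = 0 ∧
  t + (∑ j, u j) = (∑ j, y j) ∧
  (∑ j, u j) + (∑ i, v i) = ((a : ℝ) + (b : ℝ) - 2) • t

/-!
Write `h` for the height function of a facet: the linear functional equal to `1` on the facet. It
is integral, hence at most `0` on the vertices off the facet, and a facet has exactly `n` vertices.

*No vertex can be removed.* For every label other than `t` there is a nonzero linear functional
which has the same weak sign on all the other vertices, so without that vertex the origin would not
be interior. If `t` were missing, choose a facet whose cone contains `t`: the relation
`∑ v + ∑ y = (a + b - 1) t` gives `1 ≤ h t < 2`, so the lattice point `t` is a vertex after all.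

*No vertex `w` can be added.* Exactly four of the `n + 3` old vertices lie off a facet through `w`.
Summing the relations over `h` then shows first that `t` and `w` share no facet, and next that a
facet through `w` but not `z` contains all the `v i`, misses exactly one `y j` and one `u k`, and
has `h t = 0`. In the coordinates given by such a facet, `t` has coordinate `1` at every `v i`,
because only `z` can replace `v i` in the neighbouring facet; its other coordinates are nonnegative,
except that the one at `w` may be `-1`. Since `2 ≤ a`, this gives `1 ≤ h t`, a contradiction.
-/

section Basis

theorem exists_basis_exchange {K M ι : Type*} [Field K] [AddCommGroup M] [Module K M]
    (β : Module.Basis ι K M) {i : ι} {e : M} (he : β.coord i e ≠ 0) :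
    ∃ γ : Module.Basis ι K M, γ i = e ∧ ∀ j ≠ i, γ j = β j := by
  have hunit : IsUnit (1 + β.coord i (e - β i)) := by simpa using he
  refine ⟨β.map (LinearEquiv.dilatransvection hunit), ?_, fun j hj => ?_⟩
  · simp [LinearEquiv.dilatransvection.apply]
  · simp [LinearEquiv.dilatransvection.apply, hj]

variable {R M ι : Type*} [CommRing R] [AddCommGroup M] [Module R M] {β γ : Module.Basis ι R M}
  {i : ι}

theorem coord_mul_coord_of_forall_ne (h : ∀ j ≠ i, γ j = β j) :
    β.coord i (γ i) * γ.coord i (β i) = 1 := by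
  suffices hcoord : β.coord i = β.coord i (γ i) • γ.coord i by
    simpa using (LinearMap.congr_fun hcoord (β i)).symm
  refine γ.ext fun j => ?_
  rcases eq_or_ne j i with rfl | hj
  · simp
  · have hzero : γ.coord i (β j) = 0 := by simp [← h j hj, hj]
    rw [LinearMap.smul_apply, h j hj, hzero]
    simp [hj]

theorem sumCoords_eq_add_smul_coord (h : ∀ j ≠ i, γ j = β j) :
    γ.sumCoords = β.sumCoords + (γ.sumCoords (β i) - 1) • β.coord i := by
  refine β.ext fun j => ?_
  rcases eq_or_ne j i with rfl | hj
  · simp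
  · rw [← h j hj, γ.sumCoords_self_apply, h j hj]
    simp [hj]

theorem eq_sumCoords {f : M →ₗ[R] R} (hf : ∀ i, f (β i) = 1) : f = β.sumCoords :=
  β.ext fun i => by rw [hf, β.sumCoords_self_apply]

theorem sumCoords_eq_sum_coord [Fintype ι] (β : Module.Basis ι R M) (x : M) :
    β.sumCoords x = ∑ i, β.coord i x := by
  rw [β.coe_sumCoords_of_fintype, LinearMap.sum_apply]

end Basis

section Polytope

variable {n : ℕ} {Q : Set (Fin n → ℝ)}

theorem IsLatticePolytope.finite_vertexSet (hQ : IsLatticePolytope Q) : (vertexSet Q).Finite := by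
  obtain ⟨⟨S, -, rfl⟩, -⟩ := hQ
  exact S.finite_toSet.subset extremePoints_convexHull_subset

theorem IsLatticePolytope.isLatticePoint (hQ : IsLatticePolytope Q) {x : Fin n → ℝ}
    (hx : x ∈ vertexSet Q) : IsLatticePoint x := by
  obtain ⟨⟨S, hS, rfl⟩, -⟩ := hQ
  exact hS x (extremePoints_convexHull_subset hx)

theorem IsLatticePolytope.convexHull_vertexSet (hQ : IsLatticePolytope Q) :
    convexHull ℝ (vertexSet Q) = Q := by
  have hfin := hQ.finite_vertexSet
  obtain ⟨⟨S, -, rfl⟩, -⟩ := hQ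
  exact (hfin.isClosed_convexHull ℝ).closure_eq.symm.trans
    (closure_convexHull_extremePoints (S.finite_toSet.isCompact_convexHull ℝ)
      (convex_convexHull ℝ _))

theorem IsLatticePolytope.le_of_forall_vertexSet (hQ : IsLatticePolytope Q)
    (f : (Fin n → ℝ) →ₗ[ℝ] ℝ) {c : ℝ} (hf : ∀ x ∈ vertexSet Q, f x ≤ c) {x : Fin n → ℝ}
    (hx : x ∈ Q) : f x ≤ c := by
  rw [← hQ.convexHull_vertexSet] at hx
  exact convexHull_min (t := {x | f x ≤ c}) hf (convex_halfSpace_le f.isLinear c) hx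

theorem exists_pos_add_smul_mem {E : Type*} [AddCommGroup E] [Module ℝ E] [TopologicalSpace E]
    [ContinuousAdd E] [ContinuousSMul ℝ E] {S : Set E} {x : E} (hx : x ∈ interior S) (y : E) :
    ∃ ε : ℝ, 0 < ε ∧ x + ε • y ∈ S := by
  have hcont : Continuous fun ε : ℝ => x + ε • y := by fun_prop
  have htendsto : Filter.Tendsto (fun ε : ℝ => x + ε • y) (nhdsWithin 0 (Set.Ioi 0)) (nhds x) := by
    simpa using (hcont.tendsto 0).mono_left nhdsWithin_le_nhds
  obtain ⟨ε, hmem, hε⟩ :=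
    ((htendsto.eventually (mem_interior_iff_mem_nhds.1 hx)).and self_mem_nhdsWithin).exists
  exact ⟨ε, hε, hmem⟩

theorem IsSmoothFano.exists_vertex_pos (hQ : IsSmoothFano Q) {g : (Fin n → ℝ) →ₗ[ℝ] ℝ}
    (hg : g ≠ 0) : ∃ x ∈ vertexSet Q, 0 < g x := by
  by_contra! h
  have hnonpos : ∀ y, g y ≤ 0 := fun y => by
    obtain ⟨ε, hε, hy⟩ := exists_pos_add_smul_mem hQ.2.1 y
    have := hQ.1.le_of_forall_vertexSet g h hy
    simp only [zero_add, map_smul, smul_eq_mul] at this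
    exact nonpos_of_mul_nonpos_right this hε
  refine hg (LinearMap.ext fun y => le_antisymm (hnonpos y) ?_)
  simpa using hnonpos (-y)

theorem IsSmoothFano.eq_zero_of_forall_vertexSet_eq_mul (hQ : IsSmoothFano Q)
    {g : (Fin n → ℝ) →ₗ[ℝ] ℝ} {s : ℝ} (h : ∀ x ∈ vertexSet Q, ∃ c : ℝ, 0 ≤ c ∧ g x = c * s) :
    g = 0 := by
  by_contra hg
  obtain ⟨x, hx, hpos⟩ := hQ.exists_vertex_pos hg
  obtain ⟨y, hy, hneg⟩ := hQ.exists_vertex_pos (neg_ne_zero.2 hg)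
  obtain ⟨c, hc, hxc⟩ := h x hx
  obtain ⟨d, hd, hyd⟩ := h y hy
  rw [LinearMap.neg_apply, hyd, neg_pos] at hneg
  exact (mul_nonneg hd (pos_of_mul_pos_right (hxc ▸ hpos) hc).le).not_gt hneg

theorem IsSmoothFano.ne_zero_of_mem_vertexSet (hQ : IsSmoothFano Q) (hn : 0 < n) {x : Fin n → ℝ}
    (hx : x ∈ vertexSet Q) : x ≠ 0 := by
  have : Nonempty (Fin n) := ⟨⟨0, hn⟩⟩
  rintro rfl
  exact (disjoint_interior_extremePoints (S := Q)).le_bot ⟨hQ.2.1, hx⟩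

theorem IsSmoothFano.exists_add_smul_eq_one (hQ : IsSmoothFano Q) {f g : (Fin n → ℝ) →ₗ[ℝ] ℝ}
    (hf : ∀ x ∈ vertexSet Q, f x ≤ 1) (hg : g ≠ 0) :
    ∃ r : ℝ, (∀ x ∈ vertexSet Q, (f + r • g) x ≤ 1) ∧
      ∃ e ∈ vertexSet Q, 0 < g e ∧ (f + r • g) e = 1 := by
  obtain ⟨e, ⟨he, hge⟩, hmin⟩ := Set.exists_min_image {x ∈ vertexSet Q | 0 < g x}
    (fun x => (1 - f x) / g x) (hQ.1.finite_vertexSet.subset (Set.sep_subset _ _))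
    (hQ.exists_vertex_pos hg)
  have hr : 0 ≤ (1 - f e) / g e := div_nonneg (sub_nonneg.2 (hf e he)) hge.le
  refine ⟨(1 - f e) / g e, fun x hx => ?_, e, he, hge, ?_⟩
  · simp only [LinearMap.add_apply, LinearMap.smul_apply, smul_eq_mul]
    rcases le_or_gt (g x) 0 with hgx | hgx
    · linarith [hf x hx, mul_nonpos_of_nonneg_of_nonpos hr hgx]
    · linarith [(le_div_iff₀ hgx).1 (hmin x ⟨hx, hgx⟩)]
  · simp only [LinearMap.add_apply, LinearMap.smul_apply, smul_eq_mul]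
    rw [div_mul_cancel₀ _ hge.ne', add_sub_cancel]

end Polytope

section FacetBasis

variable {n : ℕ} {Q : Set (Fin n → ℝ)} {β γ : Module.Basis (Fin n) ℝ (Fin n → ℝ)}
  {x : Fin n → ℝ}

/-- The basis `β` consists of vertices of `Q` all lying on one supporting hyperplane of `Q`, which
is then `β.sumCoords = 1`. When `Q` is a smooth Fano polytope these bases are exactly the
enumerations of the vertex sets of its facets, and `β.sumCoords` is the height function of the
facet. -/
structure IsFacetBasis (Q : Set (Fin n → ℝ)) (β : Module.Basis (Fin n) ℝ (Fin n → ℝ)) : Prop where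
  mem : ∀ i, β i ∈ vertexSet Q
  sumCoords_le : ∀ x ∈ vertexSet Q, β.sumCoords x ≤ 1

theorem IsFacetBasis.isFaceOf (hβ : IsFacetBasis Q β) (hQ : IsLatticePolytope Q) :
    IsFaceOf {x ∈ Q | β.sumCoords x = 1} Q := by
  rintro ⟨x₀, hx₀, hx₀1⟩
  have hle {x} (hx : x ∈ Q) : β.sumCoords x ≤ 1 :=
    hQ.le_of_forall_vertexSet _ hβ.sumCoords_le hx
  refine ⟨LinearMap.toContinuousLinearMap β.sumCoords, Set.ext fun x =>
    and_congr_right fun hx => ⟨fun hx1 y hy => ?_, fun hmax => (hle hx).antisymm ?_⟩⟩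
  · exact (hle hy).trans_eq hx1.symm
  · exact hx₀1.symm.trans_le (hmax x₀ hx₀)

theorem IsFacetBasis.isFacetOf (hβ : IsFacetBasis Q β) (hQ : IsLatticePolytope Q) (hn : 0 < n) :
    IsFacetOf {x ∈ Q | β.sumCoords x = 1} Q := by
  refine ⟨hβ.isFaceOf hQ, le_antisymm ?_ ?_⟩
  · have hker : vectorSpan ℝ {x ∈ Q | β.sumCoords x = 1} ≤ LinearMap.ker β.sumCoords := by
      rw [vectorSpan_def, Submodule.span_le]
      rintro _ ⟨x, hx, y, hy, rfl⟩
      change β.sumCoords (x - y) = 0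
      rw [map_sub, hx.2, hy.2, sub_self]
    have hne : β.sumCoords ≠ 0 := fun h => by
      simpa [h] using β.sumCoords_self_apply ⟨0, hn⟩
    have hfin := Module.Dual.finrank_ker_add_one_of_ne_zero hne
    rw [Module.finrank_fin_fun] at hfin
    have := Submodule.finrank_mono hker
    omega
  · have : Nonempty (Fin n) := ⟨⟨0, hn⟩⟩
    have hspan := β.linearIndependent.affineIndependent.finrank_vectorSpan_add_one
    rw [Fintype.card_fin] at hspan
    have hsub : Set.range β ⊆ {x ∈ Q | β.sumCoords x = 1} :=
      Set.range_subset_iff.2 fun i => ⟨(hβ.mem i).1, β.sumCoords_self_apply i⟩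
    have := Submodule.finrank_mono (vectorSpan_mono ℝ hsub)
    omega

theorem IsFacetBasis.vertexSet_inter (hβ : IsFacetBasis Q β) (hQ : IsSmoothFano Q) (hn : 0 < n) :
    vertexSet Q ∩ {x ∈ Q | β.sumCoords x = 1} = Set.range β := by
  obtain ⟨b, hb, hrange, -, -⟩ := hQ.2.2 _ (hβ.isFacetOf hQ.1 hn)
  have hsub : Set.range β ⊆ vertexSet Q ∩ {x ∈ Q | β.sumCoords x = 1} :=
    Set.range_subset_iff.2 fun i => ⟨hβ.mem i, (hβ.mem i).1, β.sumCoords_self_apply i⟩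
  refine (Set.eq_of_subset_of_ncard_le hsub ?_ (hrange ▸ Set.finite_range b)).symm
  rw [← hrange, ← Set.image_univ, ← Set.image_univ, Set.ncard_image_of_injective _ hb,
    Set.ncard_image_of_injective _ β.injective]

theorem IsFacetBasis.mem_range (hβ : IsFacetBasis Q β) (hQ : IsSmoothFano Q)
    (hx : x ∈ vertexSet Q) (hx1 : β.sumCoords x = 1) : x ∈ Set.range β := by
  rcases n.eq_zero_or_pos with rfl | hn
  · simp at hx1
  · rw [← hβ.vertexSet_inter hQ hn]
    exact ⟨hx, hx.1, hx1⟩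

theorem exists_int_combination {b : Fin n → Fin n → ℝ} (hb : ∀ i, IsLatticePoint (b i))
    (hdet : |(Matrix.of b).det| = 1) (hx : IsLatticePoint x) :
    ∃ d : Fin n → ℤ, x = ∑ i, (d i : ℝ) • b i := by
  choose A hA using hb
  choose m hm using hx
  have hAb : Matrix.of b = (Matrix.of A).map (Int.castRingHom ℝ) := by
    ext i j; simp [hA]
  have hu : IsUnit (Matrix.of A).det := by
    rw [hAb, ← RingHom.mapMatrix_apply, ← RingHom.map_det, eq_intCast] at hdet
    exact Int.isUnit_iff_abs_eq.2 (by exact_mod_cast hdet)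
  refine ⟨Matrix.vecMul m (Matrix.of A)⁻¹, ?_⟩
  have h : Matrix.vecMul (Matrix.vecMul m (Matrix.of A)⁻¹) (Matrix.of A) = m := by
    rw [Matrix.vecMul_vecMul, Matrix.nonsing_inv_mul _ hu, Matrix.vecMul_one]
  generalize Matrix.vecMul m (Matrix.of A)⁻¹ = d at h
  ext j
  rw [hm, ← h]
  simp [Matrix.vecMul, dotProduct, hA]

theorem IsUnimodularBasis.coord_int (hβ : IsUnimodularBasis (Set.range β))
    (hx : IsLatticePoint x) (i : Fin n) : ∃ m : ℤ, β.coord i x = m := by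
  obtain ⟨b, -, hrange, hlat, hdet⟩ := hβ
  obtain ⟨d, rfl⟩ := exists_int_combination hlat hdet hx
  have hσ : ∀ k, ∃ j, β j = b k := fun k => by
    rw [← Set.mem_range, ← hrange]; exact Set.mem_range_self k
  choose σ hσ using hσ
  exact ⟨∑ k, d k * if σ k = i then 1 else 0, by simp [← hσ, Finsupp.single_apply]⟩

theorem IsFacetBasis.coord_int (hβ : IsFacetBasis Q β) (hQ : IsSmoothFano Q)
    (hx : IsLatticePoint x) (i : Fin n) : ∃ m : ℤ, β.coord i x = m := by
  refine IsUnimodularBasis.coord_int ?_ hx i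
  rw [← hβ.vertexSet_inter hQ i.pos]
  exact hQ.2.2 _ (hβ.isFacetOf hQ.1 i.pos)

theorem IsFacetBasis.sumCoords_int (hβ : IsFacetBasis Q β) (hQ : IsSmoothFano Q)
    (hx : IsLatticePoint x) : ∃ m : ℤ, β.sumCoords x = m := by
  choose m hm using hβ.coord_int hQ hx
  exact ⟨∑ i, m i, by simp only [sumCoords_eq_sum_coord, hm, Int.cast_sum]⟩

theorem IsFacetBasis.sumCoords_nonpos (hβ : IsFacetBasis Q β) (hQ : IsSmoothFano Q)
    (hx : x ∈ vertexSet Q) (hx1 : β.sumCoords x ≠ 1) : β.sumCoords x ≤ 0 := by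
  have hlt := lt_of_le_of_ne (hβ.sumCoords_le x hx) hx1
  obtain ⟨m, hm⟩ := hβ.sumCoords_int hQ (hQ.1.isLatticePoint hx)
  rw [hm] at hlt ⊢
  exact_mod_cast Int.lt_add_one_iff.1 (by exact_mod_cast hlt)

theorem IsFacetBasis.coord_nonneg (hβ : IsFacetBasis Q β) (hQ : IsSmoothFano Q)
    (hx : x ∈ vertexSet Q) (hx1 : β.sumCoords x = 1) (i : Fin n) : 0 ≤ β.coord i x := by
  obtain ⟨j, rfl⟩ := hβ.mem_range hQ hx hx1
  rw [Module.Basis.coord_apply, β.repr_self]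
  exact Finsupp.single_nonneg.2 zero_le_one i

theorem IsSmoothFano.exists_span_eq_top (hQ : IsSmoothFano Q) :
    ∃ f : (Fin n → ℝ) →ₗ[ℝ] ℝ, (∀ x ∈ vertexSet Q, f x ≤ 1) ∧
      Submodule.span ℝ {x ∈ vertexSet Q | f x = 1} = ⊤ := by
  let W (f : (Fin n → ℝ) →ₗ[ℝ] ℝ) := Submodule.span ℝ {x ∈ vertexSet Q | f x = 1}
  obtain ⟨f, hf, hmax⟩ : ∃ f : (Fin n → ℝ) →ₗ[ℝ] ℝ, (∀ x ∈ vertexSet Q, f x ≤ 1) ∧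
      ∀ f' : (Fin n → ℝ) →ₗ[ℝ] ℝ, (∀ x ∈ vertexSet Q, f' x ≤ 1) → ¬ W f < W f' := by
    obtain ⟨-, ⟨f, hf, rfl⟩, hmax⟩ := wellFounded_gt.has_min
      (W '' {f | ∀ x ∈ vertexSet Q, f x ≤ 1}) ⟨W 0, 0, by simp, rfl⟩
    exact ⟨f, hf, fun f' hf' => hmax _ ⟨f', hf', rfl⟩⟩
  refine ⟨f, hf, of_not_not fun hne => ?_⟩
  obtain ⟨g, hg, hker⟩ := Submodule.exists_le_ker_of_lt_top (W f) (lt_top_iff_ne_top.2 hne)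
  obtain ⟨r, hle, e, he, hge, he1⟩ := hQ.exists_add_smul_eq_one hf hg
  have hmono : W f ≤ W (f + r • g) := by
    refine Submodule.span_mono fun x hx => ⟨hx.1, ?_⟩
    have hgx : g x = 0 := hker (Submodule.subset_span hx)
    simp [hgx, hx.2]
  have he_mem : e ∈ W (f + r • g) := Submodule.subset_span ⟨he, he1⟩
  exact hmax _ hle (hmono.lt_of_not_ge fun hge' => hge.ne' (hker (hge' he_mem)))

theorem IsSmoothFano.exists_isFacetBasis (hQ : IsSmoothFano Q) : ∃ β, IsFacetBasis Q β := by
  obtain ⟨f, hf, hspan⟩ := hQ.exists_span_eq_top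
  let β₀ := Module.Basis.ofSpan hspan.ge
  have : Fintype _ := FiniteDimensional.fintypeBasisIndex β₀
  let β := β₀.reindex (Fintype.equivFinOfCardEq
    (by rw [← Module.finrank_eq_card_basis β₀, Module.finrank_fin_fun]))
  have hβ : ∀ i, β i ∈ vertexSet Q ∧ f (β i) = 1 := fun i =>
    Module.Basis.ofSpan_subset hspan.ge ⟨_, (β₀.reindex_apply _ i).symm⟩
  have hfβ : f = β.sumCoords := eq_sumCoords fun i => (hβ i).2
  exact ⟨β, fun i => (hβ i).1, hfβ ▸ hf⟩

theorem IsFacetBasis.exists_adjacent (hβ : IsFacetBasis Q β) (hQ : IsSmoothFano Q) (i : Fin n) :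
    ∃ γ, IsFacetBasis Q γ ∧ (∀ j ≠ i, γ j = β j) ∧ β.coord i (γ i) < 0 := by
  have hne : -β.coord i ≠ 0 := fun h => by simpa using LinearMap.congr_fun h (β i)
  obtain ⟨r, hle, e, he, hneg, he1⟩ := hQ.exists_add_smul_eq_one hβ.sumCoords_le hne
  rw [LinearMap.neg_apply, neg_pos] at hneg
  obtain ⟨γ, rfl, hγ⟩ := exists_basis_exchange β hneg.ne
  have hsum : β.sumCoords + r • -β.coord i = γ.sumCoords := by
    refine eq_sumCoords fun j => ?_
    rcases eq_or_ne j i with rfl | hj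
    · exact he1
    · simp [hγ j hj, hj]
  refine ⟨γ, ⟨fun j => ?_, hsum ▸ hle⟩, hγ, hneg⟩
  rcases eq_or_ne j i with rfl | hj
  · exact he
  · exact hγ j hj ▸ hβ.mem j

theorem IsFacetBasis.coord_eq_neg_one (hβ : IsFacetBasis Q β) (hγ : IsFacetBasis Q γ)
    (hQ : IsSmoothFano Q) {i : Fin n} (hne : ∀ j ≠ i, γ j = β j) (hneg : β.coord i (γ i) < 0) :
    β.coord i (γ i) = -1 := by
  obtain ⟨m, hm⟩ := hβ.coord_int hQ (hQ.1.isLatticePoint (hγ.mem i)) i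
  obtain ⟨k, hk⟩ := hγ.coord_int hQ (hQ.1.isLatticePoint (hβ.mem i)) i
  have hmul := coord_mul_coord_of_forall_ne hne
  rw [hm, hk] at hmul
  rw [hm] at hneg ⊢
  have hm0 : m < 0 := by exact_mod_cast hneg
  rcases Int.eq_one_or_neg_one_of_mul_eq_one (by exact_mod_cast hmul : m * k = 1) with rfl | rfl
  · omega
  · norm_num

theorem IsFacetBasis.sumCoords_ne_one (hγ : IsFacetBasis Q γ) (hβ : IsFacetBasis Q β)
    (hQ : IsSmoothFano Q) {i : Fin n} (hne : ∀ j ≠ i, γ j = β j) (hneg : β.coord i (γ i) < 0) :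
    γ.sumCoords (β i) ≠ 1 := by
  intro h1
  obtain ⟨j, hj⟩ := hγ.mem_range hQ (hβ.mem i) h1
  rcases eq_or_ne j i with rfl | hji
  · norm_num [hj] at hneg
  · exact hji (β.injective ((hne j hji).symm.trans hj))

theorem IsFacetBasis.exists_adjacent_vertex (hβ : IsFacetBasis Q β) (hQ : IsSmoothFano Q)
    (i : Fin n) :
    ∃ γ, IsFacetBasis Q γ ∧ β.coord i (γ i) = -1 ∧ γ.sumCoords (β i) ≠ 1 ∧
      (∀ x ∈ vertexSet Q, x ≠ β i → β.sumCoords x = 1 → γ.sumCoords x = 1) ∧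
      ∀ x ∈ vertexSet Q, β.sumCoords x ≠ 1 → γ.sumCoords x = 1 → x = γ i := by
  obtain ⟨γ, hγ, hne, hneg⟩ := hβ.exists_adjacent hQ i
  refine ⟨γ, hγ, hβ.coord_eq_neg_one hγ hQ hne hneg, hγ.sumCoords_ne_one hβ hQ hne hneg,
    fun x hx hxi hx1 => ?_, fun x hx hx1 hx1' => ?_⟩
  · obtain ⟨j, rfl⟩ := hβ.mem_range hQ hx hx1
    rw [← hne j fun hj => hxi (by rw [hj]), γ.sumCoords_self_apply]
  · obtain ⟨j, rfl⟩ := hγ.mem_range hQ hx hx1'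
    rcases eq_or_ne j i with rfl | hj
    · rfl
    · rw [hne j hj, β.sumCoords_self_apply] at hx1
      exact absurd rfl hx1

theorem IsFacetBasis.exists_swap_out (hβ : IsFacetBasis Q β) (hQ : IsSmoothFano Q)
    (hx : x ∈ vertexSet Q) (hx1 : β.sumCoords x = 1) :
    ∃ γ, IsFacetBasis Q γ ∧ γ.sumCoords x ≠ 1 ∧
      ∀ y ∈ vertexSet Q, y ≠ x → β.sumCoords y = 1 → γ.sumCoords y = 1 := by
  obtain ⟨i, rfl⟩ := hβ.mem_range hQ hx hx1
  obtain ⟨γ, hγ, -, hne, hkeep, -⟩ := hβ.exists_adjacent_vertex hQ i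
  exact ⟨γ, hγ, hne, hkeep⟩

theorem IsLatticePolytope.finite_setOf_isFacetBasis (hQ : IsLatticePolytope Q) :
    {β | IsFacetBasis Q β}.Finite := by
  refine Set.Finite.of_finite_image (f := fun β => (β : Fin n → Fin n → ℝ))
    ((Set.Finite.pi' fun _ : Fin n => hQ.finite_vertexSet).subset ?_)
    fun _ _ _ _ h => Module.Basis.eq_of_apply_eq (congrFun h)
  rintro _ ⟨β, hβ, rfl⟩
  exact hβ.mem

-- The facet of greatest height at `x` works: passing to the neighbour opposite to `β i` would
-- increase the height at `x` if the `i`-th coordinate of `x` were negative.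
theorem IsSmoothFano.exists_isFacetBasis_coord_nonneg (hQ : IsSmoothFano Q) (x : Fin n → ℝ) :
    ∃ β, IsFacetBasis Q β ∧ ∀ i, 0 ≤ β.coord i x := by
  obtain ⟨β, hβ, hmax⟩ := Set.exists_max_image _ (fun β => β.sumCoords x)
    hQ.1.finite_setOf_isFacetBasis hQ.exists_isFacetBasis
  refine ⟨β, hβ, fun i => ?_⟩
  by_contra! hi
  obtain ⟨γ, hγ, hne, hneg⟩ := hβ.exists_adjacent hQ i
  have hlt : γ.sumCoords (β i) < 1 :=
    (hγ.sumCoords_le _ (hβ.mem i)).lt_of_ne (hγ.sumCoords_ne_one hβ hQ hne hneg)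
  have hheight := LinearMap.congr_fun (sumCoords_eq_add_smul_coord hne) x
  rw [LinearMap.add_apply, LinearMap.smul_apply, smul_eq_mul] at hheight
  linarith [hmax γ hγ, mul_pos_of_neg_of_neg (sub_neg.2 hlt) hi]

theorem exists_eq_single_of_sum_le_one {ι : Type*} [Fintype ι] [DecidableEq ι] {m : ι → ℤ}
    (hm : ∀ i, 0 ≤ m i) (hne : m ≠ 0) (hsum : ∑ i, m i ≤ 1) : ∃ i, m = Pi.single i 1 := by
  obtain ⟨i, hi⟩ := Function.ne_iff.1 hne
  have hi1 : 1 ≤ m i := (hm i).lt_of_ne' hi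
  have hsplit := Finset.add_sum_erase Finset.univ m (Finset.mem_univ i)
  have hrest : ∑ j ∈ Finset.univ.erase i, m j = 0 :=
    le_antisymm (by omega) (Finset.sum_nonneg fun j _ => hm j)
  refine ⟨i, funext fun j => ?_⟩
  rcases eq_or_ne j i with rfl | hj
  · rw [Pi.single_eq_same]
    omega
  · rw [Pi.single_eq_of_ne hj]
    exact (Finset.sum_eq_zero_iff_of_nonneg fun k _ => hm k).1 hrest j (by simp [hj])

theorem IsSmoothFano.exists_one_le_sumCoords (hQ : IsSmoothFano Q) (hx : IsLatticePoint x)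
    (hx0 : x ≠ 0) :
    ∃ β, IsFacetBasis Q β ∧ 1 ≤ β.sumCoords x ∧ (β.sumCoords x < 2 → x ∈ vertexSet Q) := by
  obtain ⟨β, hβ, hpos⟩ := hQ.exists_isFacetBasis_coord_nonneg x
  choose m hm using hβ.coord_int hQ hx
  have hm0 : ∀ i, 0 ≤ m i := fun i => by exact_mod_cast hm i ▸ hpos i
  have hsum : β.sumCoords x = ((∑ i, m i : ℤ) : ℝ) := by
    simp only [sumCoords_eq_sum_coord, hm, Int.cast_sum]
  have hne : m ≠ 0 := by
    rintro rfl
    exact hx0 (β.ext_elem fun i => by simpa using hm i)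
  refine ⟨β, hβ, ?_, fun hlt => ?_⟩
  · have hsum_pos : 0 < ∑ i, m i :=
      (Finset.sum_nonneg fun i _ => hm0 i).lt_of_ne' fun h => hne <| funext fun i =>
        (Finset.sum_eq_zero_iff_of_nonneg fun j _ => hm0 j).1 h i (Finset.mem_univ i)
    rw [hsum]
    exact_mod_cast hsum_pos
  · rw [hsum] at hlt
    obtain ⟨i, rfl⟩ := exists_eq_single_of_sum_le_one hm0 hne
      (Int.lt_add_one_iff.1 (by exact_mod_cast hlt))
    have hxi : x = β i := β.ext_elem fun j => by
      rw [← β.coord_apply, hm, β.repr_self]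
      simp [Pi.single_apply, Finsupp.single_apply, eq_comm]
    exact hxi ▸ hβ.mem i

theorem IsSmoothFano.eq_zero_of_mem_interior (hQ : IsSmoothFano Q) (hx : IsLatticePoint x)
    (hxi : x ∈ interior Q) : x = 0 := by
  by_contra hx0
  obtain ⟨β, hβ, h1, -⟩ := hQ.exists_one_le_sumCoords hx hx0
  obtain ⟨ε, hε, hmem⟩ := exists_pos_add_smul_mem hxi x
  have hle := hQ.1.le_of_forall_vertexSet _ hβ.sumCoords_le hmem
  rw [map_add, map_smul, smul_eq_mul] at hle
  linarith [mul_pos hε (zero_lt_one.trans_le h1)]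

theorem IsSmoothFano.exists_sumCoords_eq_one (hQ : IsSmoothFano Q) (hn : 0 < n)
    (hx : x ∈ vertexSet Q) : ∃ β, IsFacetBasis Q β ∧ β.sumCoords x = 1 := by
  obtain ⟨β, hβ, h1, -⟩ := hQ.exists_one_le_sumCoords (hQ.1.isLatticePoint hx)
    (hQ.ne_zero_of_mem_vertexSet hn hx)
  exact ⟨β, hβ, (hβ.sumCoords_le x hx).antisymm h1⟩

end FacetBasis

section Counting

variable {n : ℕ} {Q : Set (Fin n → ℝ)} {β : Module.Basis (Fin n) ℝ (Fin n → ℝ)}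
  {ι : Type*} [Fintype ι] {p : ι → Fin n → ℝ}

open scoped Classical in
/-- The number of members of the family `p` off the hyperplane `β.sumCoords = 1`, that is, off the
facet spanned by `β` when `β` is a facet basis. -/
noncomputable def numOff (β : Module.Basis (Fin n) ℝ (Fin n → ℝ)) (p : ι → Fin n → ℝ) : ℕ :=
  ∑ i, if β.sumCoords (p i) = 1 then 0 else 1

theorem numOff_eq_zero_iff : numOff β p = 0 ↔ ∀ i, β.sumCoords (p i) = 1 := by
  simp [numOff]

theorem exists_of_numOff_eq_one (h : numOff β p = 1) : ∃ j, ∀ i ≠ j, β.sumCoords (p i) = 1 := by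
  classical
  obtain ⟨j, hj⟩ : ∃ j, β.sumCoords (p j) ≠ 1 := by
    by_contra! hall
    exact one_ne_zero (h.symm.trans (numOff_eq_zero_iff.2 hall))
  rw [numOff, ← Finset.add_sum_erase _ _ (Finset.mem_univ j), if_neg hj, Nat.add_eq_left,
    Finset.sum_eq_zero_iff] at h
  exact ⟨j, fun i hi => by simpa using h i (by simp [hi])⟩

theorem IsFacetBasis.numOff_le (hβ : IsFacetBasis Q β) (hQ : IsSmoothFano Q)
    (hp : ∀ i, p i ∈ vertexSet Q) :
    (numOff β p : ℝ) ≤ Fintype.card ι - ∑ i, β.sumCoords (p i) := by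
  classical
  calc (numOff β p : ℝ) ≤ ∑ i, (1 - β.sumCoords (p i)) := by
        rw [numOff, Nat.cast_sum]
        refine Finset.sum_le_sum fun i _ => ?_
        split_ifs with h1
        · rw [h1, sub_self, Nat.cast_zero]
        · rw [Nat.cast_one, le_sub_self_iff]
          exact hβ.sumCoords_nonpos hQ (hp i) h1
    _ = Fintype.card ι - ∑ i, β.sumCoords (p i) := by
        rw [Finset.sum_sub_distrib, Finset.sum_const, nsmul_one, Finset.card_univ]

theorem IsFacetBasis.numOff_add (hβ : IsFacetBasis Q β) (hQ : IsSmoothFano Q)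
    (hp : Function.Injective p) {w : Fin n → ℝ} (hV : vertexSet Q = Set.range p ∪ {w})
    (hw : w ∉ Set.range p) (hw1 : β.sumCoords w = 1) : numOff β p + n = Fintype.card ι + 1 := by
  classical
  have hrange : p '' {i | β.sumCoords (p i) = 1} = Set.range β \ {w} := by
    ext x
    constructor
    · rintro ⟨i, hi, rfl⟩
      exact ⟨hβ.mem_range hQ (hV ▸ Or.inl ⟨i, rfl⟩) hi, fun h => hw ⟨i, h⟩⟩
    · rintro ⟨⟨j, rfl⟩, hj⟩
      obtain ⟨i, hi⟩ : β j ∈ Set.range p := (hV ▸ hβ.mem j).resolve_right hj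
      exact ⟨i, by rw [Set.mem_ofPred_eq, hi, β.sumCoords_self_apply], hi⟩
  have hon := Set.ncard_sdiff_singleton_add_one (hβ.mem_range hQ (hV ▸ Or.inr rfl) hw1)
    (Set.finite_range β)
  rw [← hrange, Set.ncard_image_of_injective _ hp, ← Set.image_univ,
    Set.ncard_image_of_injective _ β.injective, Set.ncard_univ, Nat.card_fin,
    Set.ncard_eq_toFinset_card', Set.toFinset_ofPred] at hon
  have hoff : numOff β p = Finset.card {i | ¬ β.sumCoords (p i) = 1} := by
    simp [numOff, Finset.card_filter]
  have htotal := Finset.card_filter_add_card_filter_not (s := (Finset.univ : Finset ι))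
    fun i => β.sumCoords (p i) = 1
  rw [hoff, ← Finset.card_univ]
  omega

theorem IsFacetBasis.neg_one_le_sum_coord (hβ : IsFacetBasis Q β) (hQ : IsSmoothFano Q)
    (hp : ∀ i, p i ∈ vertexSet Q) {l : Fin n} {j : ι} (hne : ∀ i ≠ j, β.sumCoords (p i) = 1)
    (hj : β.coord l (p j) = -1) : -1 ≤ ∑ i, β.coord l (p i) := by
  classical
  rw [← Finset.add_sum_erase _ _ (Finset.mem_univ j), hj, le_add_iff_nonneg_right]
  exact Finset.sum_nonneg fun i hi =>
    hβ.coord_nonneg hQ (hp i) (hne i (Finset.ne_of_mem_erase hi)) l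

end Counting

section Labelling

/-- The labels `v_1, …, v_a, y_1, …, y_b, u_1, …, u_b, z, t` of the vertices. -/
inductive Label (a b : ℕ)
  | v (i : Fin a)
  | y (j : Fin b)
  | u (k : Fin b)
  | z
  | t

variable {a b : ℕ}

namespace Label

/-- The labels as a disjoint union of the three indexed kinds and of `z` and `t`. -/
def equivSum : Label a b ≃ (Fin a ⊕ Fin b ⊕ Fin b) ⊕ Bool where
  toFun
    | v i => .inl (.inl i)
    | y j => .inl (.inr (.inl j))
    | u k => .inl (.inr (.inr k))
    | z => .inr true
    | t => .inr false
  invFun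
    | .inl (.inl i) => v i
    | .inl (.inr (.inl j)) => y j
    | .inl (.inr (.inr k)) => u k
    | .inr true => z
    | .inr false => t
  left_inv := by rintro (_ | _ | _ | _ | _) <;> rfl
  right_inv := by rintro ((_ | _ | _) | _ | _) <;> rfl

instance : Fintype (Label a b) := Fintype.ofEquiv _ equivSum.symm

theorem card : Fintype.card (Label a b) = a + 2 * b + 2 := by
  rw [Fintype.card_congr equivSum]
  simp only [Fintype.card_sum, Fintype.card_fin, Fintype.card_bool]
  omega

theorem sum_eq {M : Type*} [AddCommMonoid M] (f : Label a b → M) :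
    ∑ l, f l = ∑ i, f (v i) + (∑ j, f (y j) + ∑ k, f (u k)) + (f z + f t) := by
  rw [← equivSum.symm.sum_comp]
  simp only [Fintype.sum_sum_type, Fintype.sum_bool]
  rfl

end Label

variable {M N : Type*} [AddCommGroup M] [Module ℝ M] [AddCommGroup N] [Module ℝ N]

/-- The primitive relations for `{v_i, y_j}`, `{z, t}` and `{t, u_k}`; the other two primitive
relations are consequences of these. -/
structure SatisfiesRelations (p : Label a b → M) : Prop where
  sum_v_add_sum_y : ∑ i, p (.v i) + ∑ j, p (.y j) = ((a : ℝ) + b - 1) • p .t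
  z_add_t : p .z + p .t = 0
  t_add_sum_u : p .t + ∑ k, p (.u k) = ∑ j, p (.y j)

theorem SatisfiesRelations.map {p : Label a b → M} (h : SatisfiesRelations p) (f : M →ₗ[ℝ] N) :
    SatisfiesRelations (f ∘ p) where
  sum_v_add_sum_y := by
    simp only [Function.comp_apply, ← map_sum, ← map_add, h.sum_v_add_sum_y, map_smul]
  z_add_t := by simp only [Function.comp_apply, ← map_add, h.z_add_t, map_zero]
  t_add_sum_u := by simp only [Function.comp_apply, ← map_sum, ← map_add, h.t_add_sum_u]

theorem SatisfiesRelations.apply {p : Label a b → M} (h : SatisfiesRelations p) (f : M →ₗ[ℝ] ℝ) :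
    ∑ i, f (p (.v i)) + ∑ j, f (p (.y j)) = ((a : ℝ) + b - 1) * f (p .t) ∧
      f (p .z) = -f (p .t) ∧ f (p .t) + ∑ k, f (p (.u k)) = ∑ j, f (p (.y j)) :=
  ⟨(h.map f).sum_v_add_sum_y, eq_neg_of_add_eq_zero_left (h.map f).z_add_t, (h.map f).t_add_sum_u⟩

variable {n : ℕ} {p : Label a b → Fin n → ℝ}

/-- The points `p` are distinct, are in number three more than the dimension, and satisfy the
relations of the theorem; they are meant to be the vertices of a smooth Fano polytope. -/
structure IsIsolatedLabelling (p : Label a b → Fin n → ℝ) : Prop where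
  two_le_a : 2 ≤ a
  two_le_b : 2 ≤ b
  dim : n + 1 = a + 2 * b
  injective : Function.Injective p
  relations : SatisfiesRelations p

theorem IsIsolatedLabelling.dim_pos (h : IsIsolatedLabelling p) : 0 < n := by
  have := h.dim
  have := h.two_le_a
  omega

theorem IsIsolatedLabelling.map (h : IsIsolatedLabelling p)
    (f : (Fin n → ℝ) ≃ₗ[ℝ] (Fin n → ℝ)) : IsIsolatedLabelling (f ∘ p) where
  two_le_a := h.two_le_a
  two_le_b := h.two_le_b
  dim := h.dim
  injective := f.injective.comp h.injective
  relations := h.relations.map f.toLinearMap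

end Labelling

section Extension

variable {n a b : ℕ} {Q : Set (Fin n → ℝ)} {p : Label a b → Fin n → ℝ} {w : Fin n → ℝ}
  {β : Module.Basis (Fin n) ℝ (Fin n → ℝ)} {l : Fin n}

/-- The smooth Fano polytope `Q` has the labelled points `p` and one further point `w` as its
vertices. No such `Q` exists (`IsOneVertexExtension.elim`). -/
structure IsOneVertexExtension (Q : Set (Fin n → ℝ)) (p : Label a b → Fin n → ℝ)
    (w : Fin n → ℝ) : Prop extends IsIsolatedLabelling p where
  smooth : IsSmoothFano Q
  notMem : w ∉ Set.range p
  vertexSet_eq : vertexSet Q = Set.range p ∪ {w}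

namespace IsOneVertexExtension

theorem mem (h : IsOneVertexExtension Q p w) (k : Label a b) : p k ∈ vertexSet Q :=
  h.vertexSet_eq ▸ Or.inl ⟨k, rfl⟩

theorem new_mem (h : IsOneVertexExtension Q p w) : w ∈ vertexSet Q :=
  h.vertexSet_eq ▸ Or.inr rfl

theorem new_ne (h : IsOneVertexExtension Q p w) (k : Label a b) : w ≠ p k :=
  fun hk => h.notMem ⟨k, hk.symm⟩

open scoped Classical in
theorem numOff_add_numOff (h : IsOneVertexExtension Q p w) (hβ : IsFacetBasis Q β)
    (hw : β.sumCoords w = 1) :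
    numOff β (p ∘ .v) + (numOff β (p ∘ .y) + numOff β (p ∘ .u)) +
      ((if β.sumCoords (p .z) = 1 then 0 else 1) +
        if β.sumCoords (p .t) = 1 then 0 else 1) = 4 := by
  have hcount := hβ.numOff_add h.smooth h.injective h.vertexSet_eq h.notMem hw
  have hdim := h.dim
  rw [numOff, Label.sum_eq, Label.card] at hcount
  simp only [numOff, Function.comp_apply]
  omega

theorem numOff_le (h : IsOneVertexExtension Q p w) (hβ : IsFacetBasis Q β) :
    (numOff β (p ∘ .v) : ℝ) ≤ a - ∑ i, β.sumCoords (p (.v i)) ∧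
      (numOff β (p ∘ .y) : ℝ) ≤ b - ∑ j, β.sumCoords (p (.y j)) ∧
      (numOff β (p ∘ .u) : ℝ) ≤ b - ∑ k, β.sumCoords (p (.u k)) := by
  have hle {m : ℕ} (f : Fin m → Label a b) :
      (numOff β (p ∘ f) : ℝ) ≤ m - ∑ i, β.sumCoords (p (f i)) := by
    simpa only [Fintype.card_fin, Function.comp_apply] using
      hβ.numOff_le h.smooth (p := p ∘ f) fun i => h.mem (f i)
  exact ⟨hle _, hle _, hle _⟩

theorem sumCoords_v_eq_one (h : IsOneVertexExtension Q p w) (hβ : IsFacetBasis Q β)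
    (ht : β.sumCoords (p .t) = 1) (hw : β.sumCoords w = 1) (i : Fin a) :
    β.sumCoords (p (.v i)) = 1 := by
  obtain ⟨hvy, hzt, htu⟩ := h.relations.apply β.sumCoords
  obtain ⟨hv, hy, hu⟩ := h.numOff_le hβ
  have hz : β.sumCoords (p .z) ≠ 1 := by
    rw [hzt, ht]
    norm_num
  have hcount := h.numOff_add_numOff hβ hw
  rw [if_neg hz, if_pos ht] at hcount
  have hcount' : (numOff β (p ∘ .v) + (numOff β (p ∘ .y) + numOff β (p ∘ .u)) : ℝ) = 3 := by
    exact_mod_cast Nat.add_right_cancel hcount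
  rw [ht] at hvy htu
  have hzero : (numOff β (p ∘ .v) : ℝ) ≤ 0 := by linarith
  exact numOff_eq_zero_iff.1 (Nat.le_zero.1 (by exact_mod_cast hzero)) i

theorem sumCoords_t_ne_one (h : IsOneVertexExtension Q p w) (hβ : IsFacetBasis Q β)
    (hw : β.sumCoords w = 1) : β.sumCoords (p .t) ≠ 1 := by
  intro ht
  let i : Fin a := ⟨0, two_pos.trans_le h.two_le_a⟩
  obtain ⟨γ, hγ, hoff, hkeep⟩ :=
    hβ.exists_swap_out h.smooth (h.mem (.v i)) (h.sumCoords_v_eq_one hβ ht hw i)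
  exact hoff (h.sumCoords_v_eq_one hγ
    (hkeep _ (h.mem _) (h.injective.ne nofun) ht) (hkeep _ h.new_mem (h.new_ne _) hw) i)

theorem sumCoords_u_eq_one (h : IsOneVertexExtension Q p w) (hβ : IsFacetBasis Q β)
    (hw : β.sumCoords w = 1) (hy : ∀ j, β.sumCoords (p (.y j)) = 1) (k : Fin b) :
    β.sumCoords (p (.u k)) = 1 := by
  obtain ⟨-, -, htu⟩ := h.relations.apply β.sumCoords
  have ht := hβ.sumCoords_nonpos h.smooth (h.mem .t) (h.sumCoords_t_ne_one hβ hw)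
  have hsum : ∑ j, β.sumCoords (p (.y j)) = b := by simp only [hy, Fin.sum_const, nsmul_one]
  have hzero : (numOff β (p ∘ .u) : ℝ) ≤ 0 := by linarith [(h.numOff_le hβ).2.2]
  exact numOff_eq_zero_iff.1 (Nat.le_zero.1 (by exact_mod_cast hzero)) k

theorem exists_sumCoords_y_ne_one (h : IsOneVertexExtension Q p w) (hβ : IsFacetBasis Q β)
    (hw : β.sumCoords w = 1) : ∃ j, β.sumCoords (p (.y j)) ≠ 1 := by
  by_contra! hy
  let k : Fin b := ⟨0, two_pos.trans_le h.two_le_b⟩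
  obtain ⟨γ, hγ, hoff, hkeep⟩ :=
    hβ.exists_swap_out h.smooth (h.mem (.u k)) (h.sumCoords_u_eq_one hβ hw hy k)
  exact hoff (h.sumCoords_u_eq_one hγ (hkeep _ h.new_mem (h.new_ne _) hw)
    (fun j => hkeep _ (h.mem _) (h.injective.ne nofun) (hy j)) k)

theorem sumCoords_t_eq_zero (h : IsOneVertexExtension Q p w) (hβ : IsFacetBasis Q β)
    (hw : β.sumCoords w = 1) (hz : β.sumCoords (p .z) ≠ 1) : β.sumCoords (p .t) = 0 := by
  have ht := hβ.sumCoords_nonpos h.smooth (h.mem .t) (h.sumCoords_t_ne_one hβ hw)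
  have hz := hβ.sumCoords_nonpos h.smooth (h.mem .z) hz
  rw [(h.relations.apply β.sumCoords).2.1] at hz
  linarith

theorem numOff_eq (h : IsOneVertexExtension Q p w) (hβ : IsFacetBasis Q β)
    (hw : β.sumCoords w = 1) (hz : β.sumCoords (p .z) ≠ 1) :
    numOff β (p ∘ .v) = 0 ∧ numOff β (p ∘ .y) = 1 ∧ numOff β (p ∘ .u) = 1 := by
  obtain ⟨-, -, htu⟩ := h.relations.apply β.sumCoords
  have hcount := h.numOff_add_numOff hβ hw
  rw [if_neg hz, if_neg (h.sumCoords_t_ne_one hβ hw)] at hcount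
  obtain ⟨j, hj⟩ := h.exists_sumCoords_y_ne_one hβ hw
  have hy : numOff β (p ∘ .y) ≠ 0 := fun h0 => hj (numOff_eq_zero_iff.1 h0 j)
  have hu : numOff β (p ∘ .u) ≠ 0 := fun h0 => by
    have hon : ∀ k, β.sumCoords (p (.u k)) = 1 := numOff_eq_zero_iff.1 h0
    rw [h.sumCoords_t_eq_zero hβ hw hz, zero_add] at htu
    have hsum : ∑ k, β.sumCoords (p (.u k)) = b := by simp only [hon, Fin.sum_const, nsmul_one]
    have hzero : (numOff β (p ∘ .y) : ℝ) ≤ 0 := by linarith [(h.numOff_le hβ).2.1]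
    exact hy (Nat.le_zero.1 (by exact_mod_cast hzero))
  omega

theorem exists_sumCoords_new_eq_one_z_ne_one (h : IsOneVertexExtension Q p w) :
    ∃ β, IsFacetBasis Q β ∧ β.sumCoords w = 1 ∧ β.sumCoords (p .z) ≠ 1 := by
  obtain ⟨β, hβ, hw⟩ := h.smooth.exists_sumCoords_eq_one h.dim_pos h.new_mem
  by_cases hz : β.sumCoords (p .z) = 1
  · obtain ⟨γ, hγ, hoff, hkeep⟩ := hβ.exists_swap_out h.smooth (h.mem .z) hz
    exact ⟨γ, hγ, hkeep _ h.new_mem (h.new_ne _) hw, hoff⟩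
  · exact ⟨β, hβ, hw, hz⟩

theorem coord_t_eq_one (h : IsOneVertexExtension Q p w) (hβ : IsFacetBasis Q β)
    (hw : β.sumCoords w = 1) (hz : β.sumCoords (p .z) ≠ 1) {i : Fin a} (hl : β l = p (.v i)) :
    β.coord l (p .t) = 1 := by
  obtain ⟨γ, hγ, hneg, hoff, hkeep, hnew⟩ := hβ.exists_adjacent_vertex h.smooth l
  have hwγ : γ.sumCoords w = 1 := hkeep w h.new_mem (hl ▸ h.new_ne _) hw
  have hzγ : γ.sumCoords (p .z) = 1 := of_not_not fun hzγ =>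
    hoff (hl ▸ numOff_eq_zero_iff.1 (h.numOff_eq hγ hwγ hzγ).1 i)
  rw [← hnew _ (h.mem .z) hz hzγ, (h.relations.apply (β.coord l)).2.1] at hneg
  exact neg_inj.1 hneg

theorem sum_coord_v_nonneg (h : IsOneVertexExtension Q p w) (hβ : IsFacetBasis Q β)
    (hw : β.sumCoords w = 1) (hz : β.sumCoords (p .z) ≠ 1) (l : Fin n) :
    0 ≤ ∑ i, β.coord l (p (.v i)) :=
  Finset.sum_nonneg fun i _ => hβ.coord_nonneg h.smooth (h.mem _)
    (numOff_eq_zero_iff.1 (h.numOff_eq hβ hw hz).1 i) l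

theorem neg_one_le_sum_coord {m : ℕ} {f : Fin m → Label a b} (h : IsOneVertexExtension Q p w)
    (hβ : IsFacetBasis Q β) (hf : numOff β (p ∘ f) = 1) {j : Fin m}
    (hj : β.coord l (p (f j)) = -1) : -1 ≤ ∑ i, β.coord l (p (f i)) := by
  obtain ⟨j₀, hj₀⟩ := exists_of_numOff_eq_one hf
  obtain rfl : j = j₀ := of_not_not fun hne => by
    linarith [hβ.coord_nonneg h.smooth (h.mem _) (hj₀ j hne) l]
  exact hβ.neg_one_le_sum_coord h.smooth (fun i => h.mem (f i)) hj₀ hj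

theorem coord_t_nonneg_of_neg_one_le_mul (h : IsOneVertexExtension Q p w) (hβ : IsFacetBasis Q β)
    {c : ℝ} (hc : 1 < c) (hmul : -1 ≤ c * β.coord l (p .t)) : 0 ≤ β.coord l (p .t) := by
  obtain ⟨m, hm⟩ := hβ.coord_int h.smooth (h.smooth.1.isLatticePoint (h.mem .t)) l
  rw [hm] at hmul ⊢
  by_contra! hneg
  have hm1 : (m : ℝ) ≤ -1 := by
    have : m < 0 := by exact_mod_cast hneg
    exact_mod_cast (by omega : m ≤ -1)
  linarith [mul_le_mul_of_nonneg_left hm1 (zero_lt_one.trans hc).le]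

theorem coord_t_nonneg_or (h : IsOneVertexExtension Q p w) (hβ : IsFacetBasis Q β)
    (hw : β.sumCoords w = 1) (hz : β.sumCoords (p .z) ≠ 1) (l : Fin n) :
    0 ≤ β.coord l (p .t) ∨ β.coord l (p .t) = -1 ∧ β l = w := by
  have ha : (2 : ℝ) ≤ a := by exact_mod_cast h.two_le_a
  have hb : (2 : ℝ) ≤ b := by exact_mod_cast h.two_le_b
  obtain ⟨hvy, hzt, htu⟩ := h.relations.apply (β.coord l)
  have hv := h.sum_coord_v_nonneg hβ hw hz l
  obtain ⟨hoff_v, hoff_y, hoff_u⟩ := h.numOff_eq hβ hw hz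
  obtain ⟨γ, hγ, hneg, -, hkeep, -⟩ := hβ.exists_adjacent_vertex h.smooth l
  have hoff : β.sumCoords (γ l) ≠ 1 := fun hon => by
    linarith [hβ.coord_nonneg h.smooth (hγ.mem l) hon l]
  obtain ⟨k, hk⟩ : γ l ∈ Set.range p :=
    (h.vertexSet_eq ▸ hγ.mem l).resolve_right fun hl => hoff (by rw [hl, hw])
  rw [← hk] at hneg hoff
  cases k with
  | v i => exact absurd (numOff_eq_zero_iff.1 hoff_v i) hoff
  | y j =>
    have hy := h.neg_one_le_sum_coord hβ hoff_y hneg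
    exact .inl (h.coord_t_nonneg_of_neg_one_le_mul hβ (by linarith : 1 < (a : ℝ) + b - 1)
      (by linarith))
  | u k =>
    have hu := h.neg_one_le_sum_coord hβ hoff_u hneg
    exact .inl (h.coord_t_nonneg_of_neg_one_le_mul hβ (by linarith : 1 < (a : ℝ) + b - 2)
      (by linarith))
  | z => exact .inl (by linarith)
  | t =>
    refine .inr ⟨hneg, of_not_not fun hne => ?_⟩
    exact h.sumCoords_t_ne_one hγ (hkeep w h.new_mem (Ne.symm hne) hw)
      (hk ▸ γ.sumCoords_self_apply l)

theorem elim (h : IsOneVertexExtension Q p w) : False := by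
  classical
  obtain ⟨β, hβ, hw, hz⟩ := h.exists_sumCoords_new_eq_one_z_ne_one
  have hv := numOff_eq_zero_iff.1 (h.numOff_eq hβ hw hz).1
  let i₀ : Fin a := ⟨0, two_pos.trans_le h.two_le_a⟩
  let i₁ : Fin a := ⟨1, h.two_le_a⟩
  obtain ⟨l₀, hl₀⟩ := hβ.mem_range h.smooth (h.mem (.v i₀)) (hv i₀)
  obtain ⟨l₁, hl₁⟩ := hβ.mem_range h.smooth (h.mem (.v i₁)) (hv i₁)
  obtain ⟨m, hm⟩ := hβ.mem_range h.smooth h.new_mem hw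
  have hl : l₀ ≠ l₁ := by
    rintro rfl
    simpa [i₀, i₁] using h.injective (hl₀.symm.trans hl₁)
  have hlower (l : Fin n) :
      (Pi.single l₀ 1 + Pi.single l₁ 1 - Pi.single m 1 : Fin n → ℝ) l ≤ β.coord l (p .t) := by
    simp only [Pi.sub_apply, Pi.add_apply, Pi.single_apply]
    by_cases h₀ : l = l₀
    · rw [if_pos h₀, if_neg (h₀ ▸ hl), h.coord_t_eq_one hβ hw hz (h₀ ▸ hl₀)]
      split_ifs <;> norm_num
    by_cases h₁ : l = l₁
    · rw [if_pos h₁, if_neg h₀, h.coord_t_eq_one hβ hw hz (h₁ ▸ hl₁)]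
      split_ifs <;> norm_num
    rw [if_neg h₀, if_neg h₁]
    rcases h.coord_t_nonneg_or hβ hw hz l with hpos | ⟨hneg, hlw⟩
    · split_ifs <;> linarith
    · rw [if_pos (β.injective (hlw.trans hm.symm)), hneg]
      norm_num
  have hsum := Finset.sum_le_sum fun l (_ : l ∈ Finset.univ) => hlower l
  rw [← sumCoords_eq_sum_coord, h.sumCoords_t_eq_zero hβ hw hz] at hsum
  simp only [Pi.sub_apply, Pi.add_apply, Finset.sum_sub_distrib, Finset.sum_add_distrib,
    Finset.sum_pi_single', Finset.mem_univ, if_true] at hsum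
  linarith

end IsOneVertexExtension

end Extension

section Removal

theorem exists_ne_zero_forall_notMem_apply_eq_zero {K V ι : Type*} [Field K] [AddCommGroup V]
    [Module K V] [Fintype ι] (p : ι → V) (T : Finset ι)
    (hT : Fintype.card ι < Module.finrank K V + T.card) :
    ∃ g : V →ₗ[K] K, g ≠ 0 ∧ ∀ i ∉ T, g (p i) = 0 := by
  classical
  have hlt : Submodule.span K (Tᶜ.image p : Set V) < ⊤ := by
    refine lt_top_iff_ne_top.2 fun htop => ?_
    have hspan := finrank_span_finset_le_card (R := K) (Tᶜ.image p)
    rw [Set.finrank, htop, finrank_top] at hspan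
    have hcompl := Finset.card_add_card_compl T
    have himage := Finset.card_image_le (s := Tᶜ) (f := p)
    omega
  obtain ⟨g, hg, hker⟩ := Submodule.exists_le_ker_of_lt_top _ hlt
  exact ⟨g, hg, fun i hi => hker (Submodule.subset_span
    (Finset.mem_coe.2 (Finset.mem_image_of_mem p (Finset.mem_compl.2 hi))))⟩

variable {n a b : ℕ} {Q : Set (Fin n → ℝ)}

theorem IsSmoothFano.mem_vertexSet_of_forall_ne_eq_mul {ι : Type*} {p : ι → Fin n → ℝ}
    (hQ : IsSmoothFano Q) (hsub : vertexSet Q ⊆ Set.range p) {g : (Fin n → ℝ) →ₗ[ℝ] ℝ}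
    (hg : g ≠ 0) {k : ι} {s : ℝ} (h : ∀ l ≠ k, ∃ c : ℝ, 0 ≤ c ∧ g (p l) = c * s) :
    p k ∈ vertexSet Q := by
  by_contra hk
  refine hg (hQ.eq_zero_of_forall_vertexSet_eq_mul (s := s) fun x hx => ?_)
  obtain ⟨l, rfl⟩ := hsub hx
  exact h l fun hl => hk (hl ▸ hx)

namespace IsIsolatedLabelling

variable {p : Label a b → Fin n → ℝ}

theorem exists_ne_zero_forall_notMem (h : IsIsolatedLabelling p) {T : Finset (Label a b)}
    (hT : T.card = 4) : ∃ g : (Fin n → ℝ) →ₗ[ℝ] ℝ, g ≠ 0 ∧ ∀ l ∉ T, g (p l) = 0 := by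
  refine exists_ne_zero_forall_notMem_apply_eq_zero p T ?_
  have hdim := h.dim
  rw [Label.card, Module.finrank_fin_fun, hT]
  omega

theorem mem_vertexSet_of_apply_t_eq_zero (h : IsIsolatedLabelling p) (hQ : IsSmoothFano Q)
    (hsub : vertexSet Q ⊆ Set.range p) {k k' : Label a b} (hkk' : k ≠ k')
    (hk : k ≠ .z ∧ k ≠ .t) (hk' : k' ≠ .z ∧ k' ≠ .t)
    (ht : ∀ g : (Fin n → ℝ) →ₗ[ℝ] ℝ,
      (∀ l, l ≠ k → l ≠ k' → l ≠ .z → l ≠ .t → g (p l) = 0) → g (p .t) = 0) :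
    p k ∈ vertexSet Q := by
  classical
  obtain ⟨g, hg, hzero⟩ := h.exists_ne_zero_forall_notMem (T := {k, k', .z, .t})
    (by simp [hkk', hk.1, hk.2, hk'.1, hk'.2])
  have ht := ht g fun l h₁ h₂ h₃ h₄ => hzero l (by simp [h₁, h₂, h₃, h₄])
  have hz : g (p .z) = 0 := by rw [(h.relations.apply g).2.1, ht, neg_zero]
  refine hQ.mem_vertexSet_of_forall_ne_eq_mul hsub hg (s := g (p k')) fun l hl => ?_
  by_cases hlk' : l = k'
  · exact ⟨1, zero_le_one, by rw [hlk', one_mul]⟩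
  refine ⟨0, le_rfl, ?_⟩
  rw [zero_mul]
  by_cases hlz : l = .z
  · rw [hlz, hz]
  by_cases hlt : l = .t
  · rw [hlt, ht]
  exact hzero l (by simp [hl, hlk', hlz, hlt])

theorem v_mem_vertexSet (h : IsIsolatedLabelling p) (hQ : IsSmoothFano Q)
    (hsub : vertexSet Q ⊆ Set.range p) (i : Fin a) : p (.v i) ∈ vertexSet Q := by
  have : Nontrivial (Fin a) := Fin.nontrivial_iff_two_le.2 h.two_le_a
  obtain ⟨i', hi'⟩ := exists_ne i
  refine h.mem_vertexSet_of_apply_t_eq_zero hQ hsub (k' := .v i') (by simpa using hi'.symm)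
    (by simp) (by simp) fun g hg => ?_
  obtain ⟨-, -, htu⟩ := h.relations.apply g
  have hy : ∑ j, g (p (.y j)) = 0 := Finset.sum_eq_zero fun j _ => by simp [hg]
  have hu : ∑ k, g (p (.u k)) = 0 := Finset.sum_eq_zero fun k _ => by simp [hg]
  linarith

theorem y_mem_vertexSet (h : IsIsolatedLabelling p) (hQ : IsSmoothFano Q)
    (hsub : vertexSet Q ⊆ Set.range p) (j : Fin b) : p (.y j) ∈ vertexSet Q := by
  have : Nontrivial (Fin b) := Fin.nontrivial_iff_two_le.2 h.two_le_b
  obtain ⟨j', hj'⟩ := exists_ne j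
  refine h.mem_vertexSet_of_apply_t_eq_zero hQ hsub (k' := .y j') (by simpa using hj'.symm)
    (by simp) (by simp) fun g hg => ?_
  obtain ⟨hvy, -, htu⟩ := h.relations.apply g
  have hv : ∑ i, g (p (.v i)) = 0 := Finset.sum_eq_zero fun i _ => by simp [hg]
  have hu : ∑ k, g (p (.u k)) = 0 := Finset.sum_eq_zero fun k _ => by simp [hg]
  have ha : (2 : ℝ) ≤ a := by exact_mod_cast h.two_le_a
  have hb : (2 : ℝ) ≤ b := by exact_mod_cast h.two_le_b
  have hmul : ((a : ℝ) + b - 2) * g (p .t) = 0 := by linarith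
  exact (mul_eq_zero_iff_left (by linarith)).1 hmul

theorem u_mem_vertexSet (h : IsIsolatedLabelling p) (hQ : IsSmoothFano Q)
    (hsub : vertexSet Q ⊆ Set.range p) (k : Fin b) : p (.u k) ∈ vertexSet Q := by
  have : Nontrivial (Fin b) := Fin.nontrivial_iff_two_le.2 h.two_le_b
  obtain ⟨k', hk'⟩ := exists_ne k
  refine h.mem_vertexSet_of_apply_t_eq_zero hQ hsub (k' := .u k') (by simpa using hk'.symm)
    (by simp) (by simp) fun g hg => ?_
  obtain ⟨hvy, -, -⟩ := h.relations.apply g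
  have hv : ∑ i, g (p (.v i)) = 0 := Finset.sum_eq_zero fun i _ => by simp [hg]
  have hy : ∑ j, g (p (.y j)) = 0 := Finset.sum_eq_zero fun j _ => by simp [hg]
  have ha : (2 : ℝ) ≤ a := by exact_mod_cast h.two_le_a
  have hb : (2 : ℝ) ≤ b := by exact_mod_cast h.two_le_b
  have hmul : ((a : ℝ) + b - 1) * g (p .t) = 0 := by linarith
  exact (mul_eq_zero_iff_left (by linarith)).1 hmul

theorem z_mem_vertexSet (h : IsIsolatedLabelling p) (hQ : IsSmoothFano Q)
    (hsub : vertexSet Q ⊆ Set.range p) : p .z ∈ vertexSet Q := by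
  classical
  have ha : (2 : ℝ) ≤ a := by exact_mod_cast h.two_le_a
  have hb : (2 : ℝ) ≤ b := by exact_mod_cast h.two_le_b
  let i₀ : Fin a := ⟨0, two_pos.trans_le h.two_le_a⟩
  let j₀ : Fin b := ⟨0, two_pos.trans_le h.two_le_b⟩
  obtain ⟨g, hg, hzero⟩ := h.exists_ne_zero_forall_notMem (T := {.v i₀, .y j₀, .z, .t}) (by simp)
  obtain ⟨hvy, -, htu⟩ := h.relations.apply g
  have hv : ∑ i, g (p (.v i)) = g (p (.v i₀)) :=
    Fintype.sum_eq_single i₀ fun i hi => hzero _ (by simp [hi])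
  have hy : ∑ j, g (p (.y j)) = g (p (.y j₀)) :=
    Fintype.sum_eq_single j₀ fun j hj => hzero _ (by simp [hj])
  have hu : ∑ k, g (p (.u k)) = 0 := Finset.sum_eq_zero fun k _ => hzero _ (by simp)
  refine hQ.mem_vertexSet_of_forall_ne_eq_mul hsub hg (s := g (p .t)) fun l hl => ?_
  by_cases hlv : l = .v i₀
  · exact ⟨a + b - 2, by linarith, by rw [hlv]; linarith⟩
  by_cases hlt : l = .t ∨ l = .y j₀
  · refine ⟨1, zero_le_one, ?_⟩
    rcases hlt with rfl | rfl <;> linarith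
  refine ⟨0, le_rfl, ?_⟩
  rw [zero_mul, hzero l (by simp [hl, hlv, not_or.1 hlt])]

theorem t_mem_vertexSet (h : IsIsolatedLabelling p) (hQ : IsSmoothFano Q)
    (hsub : vertexSet Q ⊆ Set.range p) : p .t ∈ vertexSet Q := by
  have ha : (2 : ℝ) ≤ a := by exact_mod_cast h.two_le_a
  have hb : (2 : ℝ) ≤ b := by exact_mod_cast h.two_le_b
  have htz : p .t = -p .z := eq_neg_of_add_eq_zero_right h.relations.z_add_t
  have hlat : IsLatticePoint (p .t) := fun i => by
    obtain ⟨m, hm⟩ := hQ.1.isLatticePoint (h.z_mem_vertexSet hQ hsub) i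
    exact ⟨-m, by rw [htz, Pi.neg_apply, hm, Int.cast_neg]⟩
  have ht0 : p .t ≠ 0 := fun h0 => by
    have hzt : p .z = p .t := by rw [← neg_neg (p .z), ← htz, h0, neg_zero]
    exact absurd (h.injective hzt) nofun
  obtain ⟨β, hβ, -, hmem⟩ := hQ.exists_one_le_sumCoords hlat ht0
  have hv : ∑ i, β.sumCoords (p (.v i)) ≤ a := by
    simpa using Finset.sum_le_card_nsmul Finset.univ _ 1 fun i _ =>
      hβ.sumCoords_le _ (h.v_mem_vertexSet hQ hsub i)
  have hy : ∑ j, β.sumCoords (p (.y j)) ≤ b := by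
    simpa using Finset.sum_le_card_nsmul Finset.univ _ 1 fun j _ =>
      hβ.sumCoords_le _ (h.y_mem_vertexSet hQ hsub j)
  refine hmem ?_
  by_contra! hge
  have hmul := mul_le_mul_of_nonneg_left hge (by linarith : 0 ≤ (a : ℝ) + b - 1)
  linarith [(h.relations.apply β.sumCoords).1]

theorem vertexSet_eq_range (h : IsIsolatedLabelling p) (hQ : IsSmoothFano Q)
    (hsub : vertexSet Q ⊆ Set.range p) : vertexSet Q = Set.range p := by
  refine hsub.antisymm (Set.range_subset_iff.2 fun l => ?_)
  cases l with
  | v i => exact h.v_mem_vertexSet hQ hsub i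
  | y j => exact h.y_mem_vertexSet hQ hsub j
  | u k => exact h.u_mem_vertexSet hQ hsub k
  | z => exact h.z_mem_vertexSet hQ hsub
  | t => exact h.t_mem_vertexSet hQ hsub

end IsIsolatedLabelling

end Removal

section Transfer

variable {n a b : ℕ} {P Q R : Set (Fin n → ℝ)}

theorem isLatticePoint_apply_zero {φ : (Fin n → ℝ) → Fin n → ℝ}
    (hlat : φ '' {x | IsLatticePoint x} = {x | IsLatticePoint x}) : IsLatticePoint (φ 0) := by
  have hmem : φ 0 ∈ φ '' {x | IsLatticePoint x} :=
    Set.mem_image_of_mem _ fun _ => ⟨0, by rw [Pi.zero_apply, Int.cast_zero]⟩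
  rwa [hlat] at hmem

theorem UnimodularEquiv.exists_affineEquiv (h : UnimodularEquiv P Q) :
    ∃ φ : (Fin n → ℝ) ≃ᵃ[ℝ] (Fin n → ℝ),
      φ '' {x | IsLatticePoint x} = {x | IsLatticePoint x} ∧ φ '' P = Q := by
  obtain ⟨φ, hlat, hφ⟩ := h
  have hsurj : Function.Surjective φ.linear := by
    rw [← LinearMap.range_eq_top, eq_top_iff, ← (Pi.basisFun ℝ (Fin n)).span_eq,
      Submodule.span_le]
    rintro _ ⟨i, rfl⟩
    have hi : Pi.basisFun ℝ (Fin n) i + φ 0 ∈ {x : Fin n → ℝ | IsLatticePoint x} := fun j => by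
      obtain ⟨m, hm⟩ := isLatticePoint_apply_zero hlat j
      by_cases hji : j = i
      · exact ⟨1 + m, by simp [← hm, hji]⟩
      · exact ⟨m, by simp [hm, hji]⟩
    rw [← hlat] at hi
    obtain ⟨x, -, hx⟩ := hi
    have hlinear := φ.linearMap_vsub x 0
    simp only [vsub_eq_sub, sub_zero] at hlinear
    exact ⟨x, by rw [hlinear, hx, add_sub_cancel_right]⟩
  have hbij : Function.Bijective φ :=
    φ.linear_bijective_iff.1 ⟨LinearMap.injective_iff_surjective.2 hsurj, hsurj⟩
  exact ⟨AffineEquiv.ofBijective hbij, by simpa using hlat, by simpa using hφ⟩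

theorem UnimodularEquiv.symm (h : UnimodularEquiv P Q) : UnimodularEquiv Q P := by
  obtain ⟨φ, hlat, rfl⟩ := h.exists_affineEquiv
  have himage (S) : φ.symm '' (φ '' S) = S := φ.toEquiv.symm_image_image S
  refine ⟨φ.symm, ?_, himage P⟩
  conv_lhs => rw [← hlat]
  exact himage _

theorem UnimodularEquiv.trans (h : UnimodularEquiv P Q) (h' : UnimodularEquiv Q R) :
    UnimodularEquiv P R := by
  obtain ⟨φ, hlat, rfl⟩ := h
  obtain ⟨ψ, hlat', rfl⟩ := h'
  exact ⟨ψ.comp φ, by rw [AffineMap.coe_comp, Set.image_comp, hlat, hlat'],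
    by rw [AffineMap.coe_comp, Set.image_comp]⟩

-- The origin is the only interior lattice point of a smooth Fano polytope, so it is preserved.
theorem UnimodularEquiv.exists_linearEquiv (h : UnimodularEquiv P Q) (hP : IsSmoothFano P)
    (hQ : IsSmoothFano Q) :
    ∃ f : (Fin n → ℝ) ≃ₗ[ℝ] (Fin n → ℝ), vertexSet Q = f '' vertexSet P := by
  obtain ⟨φ, hlat, rfl⟩ := h.exists_affineEquiv
  have h0 : φ 0 = 0 := by
    refine hQ.eq_zero_of_mem_interior (isLatticePoint_apply_zero hlat) ?_
    exact ((AffineEquiv.toContinuousAffineEquiv φ).toHomeomorph.image_interior P).le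
      (Set.mem_image_of_mem _ hP.2.1)
  have hlinear : ⇑φ = φ.linear := funext fun x => by
    have hvsub := (φ : (Fin n → ℝ) →ᵃ[ℝ] (Fin n → ℝ)).linearMap_vsub x 0
    simpa [h0] using hvsub.symm
  refine ⟨φ.linear, ?_⟩
  rw [hlinear]
  exact (image_extremePoints φ.linear P).symm

/-- The vertices of `P` can be labelled so as to satisfy the relations of the theorem; no condition
is put on the primitive collections of `P`. -/
def HasIsolatedLabelling (a b : ℕ) (P : Set (Fin n → ℝ)) : Prop :=
  ∃ p : Label a b → Fin n → ℝ, IsIsolatedLabelling p ∧ vertexSet P = Set.range p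

namespace HasIsolatedLabelling

theorem of_unimodularEquiv (h : HasIsolatedLabelling a b P) (hPQ : UnimodularEquiv P Q)
    (hP : IsSmoothFano P) (hQ : IsSmoothFano Q) : HasIsolatedLabelling a b Q := by
  obtain ⟨p, hp, hV⟩ := h
  obtain ⟨f, hf⟩ := hPQ.exists_linearEquiv hP hQ
  exact ⟨f ∘ p, hp.map f, by rw [hf, hV, Set.range_comp]⟩

theorem not_iStep (h : HasIsolatedLabelling a b P) (hQ : IsSmoothFano Q) : ¬IStep Q P := by
  obtain ⟨p, hp, hV⟩ := h
  rw [IStep, hV]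
  rintro (⟨w, -, hw, hPQ⟩ | ⟨w, -, hw, hQP⟩)
  · have hVQ : vertexSet Q = Set.range p :=
      hp.vertexSet_eq_range hQ (hPQ ▸ Set.subset_union_left)
    exact hw (hVQ ▸ hPQ ▸ Or.inr rfl)
  · exact IsOneVertexExtension.elim ⟨hp, hQ, hw, hQP⟩

theorem of_relations {v : Fin a → Fin n → ℝ} {y : Fin b → Fin n → ℝ} {z t : Fin n → ℝ}
    {u : Fin b → Fin n → ℝ} (hcard : (vertexSet P).ncard = n + 3) (ha : 2 ≤ a) (hb : 2 ≤ b)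
    (hn : n + 1 = a + 2 * b)
    (hV : vertexSet P = Set.range v ∪ Set.range y ∪ {z, t} ∪ Set.range u)
    (hvy : ∑ i, v i + ∑ j, y j = ((a : ℝ) + b - 1) • t) (hzt : z + t = 0)
    (htu : t + ∑ k, u k = ∑ j, y j) : HasIsolatedLabelling a b P := by
  let p : Label a b → Fin n → ℝ
    | .v i => v i
    | .y j => y j
    | .u k => u k
    | .z => z
    | .t => t
  have hrange : vertexSet P = Set.range p := by
    rw [hV]
    refine Set.Subset.antisymm ?_ ?_
    · rintro x (((⟨i, rfl⟩ | ⟨j, rfl⟩) | rfl | rfl) | ⟨k, rfl⟩)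
      exacts [⟨.v i, rfl⟩, ⟨.y j, rfl⟩, ⟨.z, rfl⟩, ⟨.t, rfl⟩, ⟨.u k, rfl⟩]
    · rintro _ ⟨_ | _ | _ | _ | _, rfl⟩ <;> simp [p]
  refine ⟨p, ⟨ha, hb, hn, ?_, hvy, hzt, htu⟩, hrange⟩
  rw [← Set.injOn_univ]
  refine Set.injOn_of_ncard_image_eq ?_
  rw [Set.image_univ, ← hrange, hcard, Set.ncard_univ, Nat.card_eq_fintype_card, Label.card]
  omega

theorem iIsolated (h : HasIsolatedLabelling a b P) (hP : IsSmoothFano P) : IIsolated P := by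
  rintro Q - ⟨k, c, hc, hQ, hPc, hstep⟩
  have hlast := h.of_unimodularEquiv hPc hP (hc (Fin.last k))
  cases k with
  | zero => exact hQ.trans hPc.symm
  | succ k => exact absurd (hstep (Fin.last k)) (hlast.not_iStep (hc _))

end HasIsolatedLabelling

end Transfer

theorem I_isolated_of_structure_general {n : ℕ} (P : Set (Fin n → ℝ))
    (hP : IsSmoothFano P) (hcard : (vertexSet P).ncard = n + 3)
    (a b : ℕ) (ha : 2 ≤ a) (hb : 2 ≤ b) (hn : n = a + 2 * b - 1)
    (v : Fin a → Fin n → ℝ) (y : Fin b → Fin n → ℝ) (z t : Fin n → ℝ)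
    (u : Fin b → Fin n → ℝ)
    (hV : vertexSet P = Set.range v ∪ Set.range y ∪ {z, t} ∪ Set.range u)
    (hvy : ∑ i, v i + ∑ j, y j = ((a : ℝ) + b - 1) • t) (hzt : z + t = 0)
    (htu : t + ∑ k, u k = ∑ j, y j) :
    IIsolated P :=
  (HasIsolatedLabelling.of_relations hcard ha hb (by omega) hV hvy hzt htu).iIsolated hP

/-- A smooth Fano `n`-polytope with `n+3` vertices whose
primitive relations are exactly the five relations of Theorem `pic3cha`
(for some `a ≥ 2`, `b ≥ 2` with `n = a + 2b - 1` and some labeling of the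
vertices) is I-isolated. -/
theorem I_isolated_of_structure {n : ℕ} (P : Set (Fin n → ℝ))
    (hP : IsSmoothFano P) (hcard : (vertexSet P).ncard = n + 3)
    (a b : ℕ) (ha : 2 ≤ a) (hb : 2 ≤ b) (hn : n = a + 2 * b - 1)
    (v : Fin a → Fin n → ℝ) (y : Fin b → Fin n → ℝ) (z t : Fin n → ℝ)
    (u : Fin b → Fin n → ℝ)
    (hstr : HasIsolatedStructure P a b v y z t u) :
    IIsolated P := by
  obtain ⟨hV, -, hvy, -, hzt, htu, -⟩ := hstr
  exact I_isolated_of_structure_general P hP hcard a b ha hb hn v y z t u hV hvy hzt htu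
end

section
/- For all integers a ≥ 2 and b ≥ 2, the polytope P(a,b) is a smooth Fano polytope of dimension n = a + 2b − 1 with n + 3 vertices {v_1, …, v_a, y_1, …, y_b, z, t, u_1, …, u_b}, and its primitive relations are exactly: v_1+⋯+v_a+y_1+⋯+y_b = (a+b−1)t; y_1+⋯+y_b+z = u_1+⋯+u_b; z+t = 0; t+u_1+⋯+u_b = y_1+⋯+y_b; and u_1+⋯+u_b+v_1+⋯+v_a = (a+b−2)t. -/
namespace Pab

/-! The concrete polytope `P(a,b)` of dimension `n = a + 2b - 1`, from the
proof of Theorem `pic3cha` (coordinates are `0`-based: the paper's `e_q` is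
the standard basis vector at index `q - 1`). -/

/-- `v_i = e_i` for `1 ≤ i ≤ a-1`, and
`v_a = -e_1 - ⋯ - e_{a+2b-2} + (a+b-1) e_{a+2b-1}`. -/
def v (a b : ℕ) (i : Fin a) : Fin (a + 2 * b - 1) → ℝ :=
  if i.val < a - 1 then fun q => if q.val = i.val then 1 else 0
  else fun q => if q.val = a + 2 * b - 2 then ((a + b - 1 : ℕ) : ℝ) else -1

/-- `y_j = e_{a-1+j}` for `1 ≤ j ≤ b-1`, and `y_b = e_{a+b-1} + ⋯ + e_{a+2b-2}`. -/
def y (a b : ℕ) (j : Fin b) : Fin (a + 2 * b - 1) → ℝ :=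
  if j.val < b - 1 then fun q => if q.val = a - 1 + j.val then 1 else 0
  else fun q => if a + b - 2 ≤ q.val ∧ q.val ≤ a + 2 * b - 3 then 1 else 0

/-- `z = -e_{a+2b-1}`. -/
def z (a b : ℕ) : Fin (a + 2 * b - 1) → ℝ :=
  fun q => if q.val = a + 2 * b - 2 then -1 else 0

/-- `t = e_{a+2b-1}`. -/
def t (a b : ℕ) : Fin (a + 2 * b - 1) → ℝ :=
  fun q => if q.val = a + 2 * b - 2 then 1 else 0

/-- `u_j = e_{a+b-1+j}` for `1 ≤ j ≤ b-1`, and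
`u_b = e_a + ⋯ + e_{a+b-1} - e_{a+2b-1}`. -/
def u (a b : ℕ) (j : Fin b) : Fin (a + 2 * b - 1) → ℝ :=
  if j.val < b - 1 then fun q => if q.val = a + b - 1 + j.val then 1 else 0
  else fun q => if a - 1 ≤ q.val ∧ q.val ≤ a + b - 2 then 1
    else if q.val = a + 2 * b - 2 then -1 else 0

/-- The polytope `P(a,b)`. -/
def P (a b : ℕ) : Set (Fin (a + 2 * b - 1) → ℝ) :=
  convexHull ℝ
    (Set.range (v a b) ∪ Set.range (y a b) ∪ {z a b, t a b} ∪ Set.range (u a b))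

end Pab

/-!
A linear functional on `ℝ^n` is determined by its values `p` on the `n + 3` vertices, and these can
be prescribed freely except that the sums of `p` over the five blocks `v, y, z, t, u` obey the three
relations between the block sums of the vertices, leaving two free parameters: the sums `τ` over `t`
and `σ` over `y`. If `p ≤ 1`, the sum over a block of size `m` is at most `m`, with equality exactly
if `p = 1` on the whole block. So a set of labels is the label set of a proper face if and only if
the blocks that it contains are those whose inequality is tight at some point of the polygon cut out
in the `(τ, σ)`-plane. This polygon is a pentagon with edges `v, z, u, y, t` in cyclic order, so two
inequalities can be tight together exactly if they are not consecutive in `v, y, z, t, u`. Hence the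
faces are the label sets containing no two cyclically consecutive blocks, and the primitive
collections are the unions of two consecutive blocks. A facet omits three vertices from three
different blocks, and the block relations express these integrally through the remaining ones.
-/

section Exposed

variable {E ι : Type*} [AddCommGroup E] [Module ℝ E] [TopologicalSpace E] {w : ι → E} {T : Set ι}

theorem convexHull_inter_hyperplane {s : Set E} {l : StrongDual ℝ E} {c : ℝ}
    (hs : ∀ x ∈ s, l x ≤ c) :
    convexHull ℝ s ∩ {x | l x = c} = convexHull ℝ (s ∩ {x | l x = c}) := by
  refine Set.Subset.antisymm ?_ (Set.subset_inter (convexHull_mono Set.inter_subset_left)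
    (convexHull_min Set.inter_subset_right (convex_hyperplane l.toLinearMap.isLinear c)))
  suffices h : convexHull ℝ s ⊆
      {x | l x ≤ c ∧ (l x = c → x ∈ convexHull ℝ (s ∩ {x | l x = c}))} from
    fun x hx => (h hx.1).2 hx.2
  refine convexHull_min (fun x hx => ⟨hs x hx, fun h => subset_convexHull ℝ _ ⟨hx, h⟩⟩) ?_
  refine convex_iff_forall_pos.2 fun x hx y hy α β hα hβ hαβ => ?_
  have hle : l (α • x + β • y) = c - α * (c - l x) - β * (c - l y) := by
    simp only [map_add, map_smul, smul_eq_mul]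
    linear_combination c * hαβ
  have hx' := mul_nonneg hα.le (sub_nonneg.2 hx.1)
  have hy' := mul_nonneg hβ.le (sub_nonneg.2 hy.1)
  refine ⟨by linarith, fun h => ?_⟩
  have hlx : l x = c := by nlinarith
  have hly : l y = c := by nlinarith
  exact convex_convexHull ℝ _ (hx.2 hlx) (hy.2 hly) hα.le hβ.le hαβ

theorem isExposed_convexHull_inter_hyperplane {s : Set E} {l : StrongDual ℝ E} {c : ℝ}
    (hs : ∀ x ∈ s, l x ≤ c) :
    IsExposed ℝ (convexHull ℝ s) (convexHull ℝ (s ∩ {x | l x = c})) := by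
  have hle : ∀ x ∈ convexHull ℝ s, l x ≤ c :=
    convexHull_min hs (convex_halfSpace_le l.toLinearMap.isLinear c)
  rw [← convexHull_inter_hyperplane hs]
  rintro ⟨x₀, hx₀, hlx₀ : l x₀ = c⟩
  refine ⟨l, Set.ext fun x => ⟨?_, ?_⟩⟩
  · rintro ⟨hx, hlx : l x = c⟩
    exact ⟨hx, fun y hy => hlx ▸ hle y hy⟩
  · rintro ⟨hx, hmax⟩
    exact ⟨hx, (hle x hx).antisymm (hlx₀ ▸ hmax x₀ hx₀)⟩

theorem exists_eq_convexHull_inter_hyperplane {s F : Set E} (hF : IsExposed ℝ (convexHull ℝ s) F)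
    (hne : F.Nonempty) :
    ∃ (l : StrongDual ℝ E) (c : ℝ), (∀ x ∈ s, l x ≤ c) ∧
      F = convexHull ℝ (s ∩ {x | l x = c}) := by
  obtain ⟨l, rfl⟩ := hF hne
  obtain ⟨x₀, hx₀, hmax⟩ := hne
  have hs : ∀ x ∈ s, l x ≤ l x₀ := fun x hx => hmax x (subset_convexHull ℝ s hx)
  refine ⟨l, l x₀, hs, ?_⟩
  rw [← convexHull_inter_hyperplane hs]
  exact Set.ext fun x => ⟨fun hx => ⟨hx.1, (hmax x hx.1).antisymm (hx.2 x₀ hx₀)⟩,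
    fun hx => ⟨hx.1, fun y hy => (hmax y hy).trans_eq hx.2.symm⟩⟩

/-- The set of labels `T` is cut out of the family `w` by a hyperplane at height one. When `0` is
interior to the convex hull of the `w i`, the supported sets of labels are those of the proper
faces. -/
def IsSupported (w : ι → E) (T : Set ι) : Prop :=
  ∃ l : StrongDual ℝ E, ∀ i, l (w i) ≤ 1 ∧ (l (w i) = 1 ↔ i ∈ T)

/-- The nonnegative combinations of the family `w` are dense in the space, in dual form: only the
zero functional is nonpositive on the family. -/
def PositivelySpans (w : ι → E) : Prop :=
  ∀ l : StrongDual ℝ E, (∀ i, l (w i) ≤ 0) → l = 0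

theorem isSupported_empty : IsSupported w ∅ := ⟨0, fun i => by simp⟩

theorem IsSupported.isExposed (hT : IsSupported w T) :
    IsExposed ℝ (convexHull ℝ (Set.range w)) (convexHull ℝ (w '' T)) := by
  obtain ⟨l, hl⟩ := hT
  have hT : w '' T = Set.range w ∩ {x | l x = 1} := by
    rw [← Set.image_preimage_eq_range_inter]
    exact congrArg _ (Set.ext fun i => (hl i).2.symm)
  exact hT ▸ isExposed_convexHull_inter_hyperplane (Set.forall_mem_range.2 fun i => (hl i).1)

theorem PositivelySpans.exists_isSupported (hw : PositivelySpans w) {F : Set E}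
    (hF : IsExposed ℝ (convexHull ℝ (Set.range w)) F) (hne : F.Nonempty)
    (hproper : F ≠ convexHull ℝ (Set.range w)) :
    ∃ T, IsSupported w T ∧ F = convexHull ℝ (w '' T) := by
  obtain ⟨l, c, hle, rfl⟩ := exists_eq_convexHull_inter_hyperplane hF hne
  rw [Set.forall_mem_range] at hle
  rw [← Set.image_preimage_eq_range_inter] at hne hproper ⊢
  refine ⟨_, ?_, rfl⟩
  have hc : 0 < c := by
    by_contra! hc
    obtain rfl := hw l fun i => (hle i).trans hc
    obtain ⟨_, i, hi, -⟩ := convexHull_nonempty_iff.1 hne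
    obtain rfl : 0 = c := hi
    exact hproper (congrArg _ (by simp [← Set.image_univ]))
  refine ⟨c⁻¹ • l, fun i => ?_⟩
  simp [inv_mul_le_one₀ hc, inv_mul_eq_one₀ hc.ne', hle i, eq_comm]

theorem IsSupported.mem_convexHull_image_iff {i : ι} (hi : IsSupported w {i}) :
    w i ∈ convexHull ℝ (w '' T) ↔ i ∈ T := by
  refine ⟨fun h => ?_, fun h => subset_convexHull ℝ _ ⟨i, h, rfl⟩⟩
  obtain ⟨l, hl⟩ := hi
  have hmem : w i ∈ convexHull ℝ (w '' T) ∩ {x | l x = 1} := ⟨h, (hl i).2.2 rfl⟩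
  rw [convexHull_inter_hyperplane (Set.forall_mem_image.2 fun j _ => (hl j).1)] at hmem
  obtain ⟨_, ⟨j, hj, rfl⟩, hlj⟩ := convexHull_nonempty_iff.1 ⟨_, hmem⟩
  obtain rfl := (hl j).2.1 hlj
  exact hj

section SupportedSingletons

variable (hw : ∀ i, IsSupported w {i})
include hw

theorem injective_of_isSupported_singleton : Function.Injective w := fun i j hij => by
  simpa [hij] using ((hw i).mem_convexHull_image_iff (T := {j})).1

theorem range_inter_convexHull_image : Set.range w ∩ convexHull ℝ (w '' T) = w '' T := by
  rw [← Set.image_preimage_eq_range_inter]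
  exact congrArg _ (Set.ext fun i => (hw i).mem_convexHull_image_iff)

theorem convexHull_image_injective : Function.Injective fun T => convexHull ℝ (w '' T) :=
  fun S T (h : convexHull ℝ (w '' S) = convexHull ℝ (w '' T)) => Set.ext fun i => by
    rw [← (hw i).mem_convexHull_image_iff, h, (hw i).mem_convexHull_image_iff]

theorem extremePoints_convexHull_range :
    (convexHull ℝ (Set.range w)).extremePoints ℝ = Set.range w := by
  refine extremePoints_convexHull_subset.antisymm (Set.range_subset_iff.2 fun i => ?_)
  refine exposedPoints_subset_extremePoints (mem_exposedPoints_iff_exposed_singleton.2 ?_)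
  simpa using (hw i).isExposed

theorem isExposed_convexHull_image_iff (hpos : PositivelySpans w) :
    IsExposed ℝ (convexHull ℝ (Set.range w)) (convexHull ℝ (w '' T)) ↔
      IsSupported w T ∨ T = Set.univ := by
  refine ⟨fun h => ?_, ?_⟩
  · obtain rfl | hne := T.eq_empty_or_nonempty
    · exact .inl isSupported_empty
    refine or_iff_not_imp_right.2 fun hT => ?_
    have hproper : convexHull ℝ (w '' T) ≠ convexHull ℝ (Set.range w) := by
      rw [← Set.image_univ]
      exact (convexHull_image_injective hw).ne hT
    obtain ⟨S, hS, hTS⟩ := hpos.exists_isSupported h (hne.image w).convexHull hproper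
    exact convexHull_image_injective hw hTS ▸ hS
  · rintro (h | rfl)
    · exact h.isExposed
    · rw [Set.image_univ]

end SupportedSingletons

end Exposed

section PositivelySpans

variable {E ι : Type*} [NormedAddCommGroup E] [NormedSpace ℝ E] {w : ι → E}

theorem positivelySpans_of_sum_smul_eq_zero [Fintype ι] {c : ι → ℝ} (hc : ∀ i, 0 < c i)
    (hsum : ∑ i, c i • w i = 0) (hspan : Submodule.span ℝ (Set.range w) = ⊤) :
    PositivelySpans w := by
  intro l hl
  have hsum' : ∑ i, c i * l (w i) = 0 := by simpa using congrArg l hsum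
  rw [Finset.sum_eq_zero_iff_of_nonpos
    fun i _ => mul_nonpos_of_nonneg_of_nonpos (hc i).le (hl i)] at hsum'
  refine ContinuousLinearMap.coe_injective (LinearMap.ext_on_range hspan fun i => ?_)
  simpa [(hc i).ne'] using hsum' i (Finset.mem_univ i)

variable [FiniteDimensional ℝ E] [Nontrivial E]

theorem PositivelySpans.affineSpan_eq_top (hw : PositivelySpans w) :
    affineSpan ℝ (Set.range w) = ⊤ := by
  rw [AffineSubspace.affineSpan_eq_top_iff_vectorSpan_eq_top_of_nontrivial]
  by_contra h
  obtain ⟨f, hf, hker⟩ := Submodule.exists_le_ker_of_lt_top _ (lt_top_iff_ne_top.2 h)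
  let l : StrongDual ℝ E := f.toContinuousLinearMap
  have hl : l ≠ 0 := by simpa [l] using hf
  have hconst (i j : ι) : l (w i) = l (w j) := by
    have := hker (vsub_mem_vectorSpan ℝ (Set.mem_range_self i) (Set.mem_range_self j))
    simpa [l, sub_eq_zero] using this
  obtain ⟨i, hi⟩ : ∃ i, 0 < l (w i) := by
    by_contra! h
    exact hl (hw l h)
  refine hl (neg_eq_zero.1 (hw (-l) fun j => ?_))
  simpa [hconst j i] using hi.le

theorem PositivelySpans.zero_mem_interior (hw : PositivelySpans w) :
    0 ∈ interior (convexHull ℝ (Set.range w)) := by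
  by_contra h0
  obtain ⟨l, hl, hle⟩ := geometric_hahn_banach_of_nonempty_interior_point
    (convex_convexHull ℝ (Set.range w)) h0
    (interior_convexHull_nonempty_iff_affineSpan_eq_top.2 hw.affineSpan_eq_top)
  exact hl (hw l fun i => by simpa using hle (w i) (subset_convexHull ℝ _ ⟨i, rfl⟩))

end PositivelySpans

section LatticePolytope

variable {ι : Type*} {n : ℕ} {w : ι → Fin n → ℝ}

section PrimitiveCollections

variable (hpos : PositivelySpans w) (hw : ∀ i, IsSupported w {i})
include hpos hw

theorem isPrimitiveCollection_image_iff {T : Set ι} :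
    IsPrimitiveCollection (convexHull ℝ (Set.range w)) (w '' T) ↔
      ¬ IsSupported w T ∧ T ≠ Set.univ ∧ ∀ i ∈ T, IsSupported w (T \ {i}) := by
  have hne (i : ι) : T \ {i} ≠ Set.univ := fun h => (h ▸ Set.mem_univ i : i ∈ T \ {i}).2 rfl
  have hdiff (i : ι) : w '' T \ {w i} = w '' (T \ {i}) := by
    rw [Set.image_sdiff (injective_of_isSupported_singleton hw), Set.image_singleton]
  simp only [IsPrimitiveCollection, vertexSet, IsFaceOf, extremePoints_convexHull_range hw,
    Set.image_subset_range, Set.forall_mem_image, hdiff, isExposed_convexHull_image_iff hw hpos,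
    hne, or_false, not_or, true_and, Set.image_nonempty, and_assoc]
  refine and_iff_right_of_imp fun h => Set.nonempty_iff_ne_empty.2 ?_
  rintro rfl
  exact h.1 isSupported_empty

theorem isPrimitiveCollection_iff {κ : Type*} {C : κ → Set ι}
    (hC : ∀ T, IsSupported w T ↔ ∀ k, ¬ C k ⊆ T) (hanti : ∀ k l, C k ⊆ C l → k = l)
    (hproper : ∀ k, C k ≠ Set.univ) {A : Set (Fin n → ℝ)} :
    IsPrimitiveCollection (convexHull ℝ (Set.range w)) A ↔ ∃ k, A = w '' C k := by
  constructor
  · intro hA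
    obtain ⟨T, rfl⟩ : ∃ T, w '' T = A := by
      rw [← Set.subset_range_iff_exists_image_eq, ← extremePoints_convexHull_range hw]
      exact hA.2.1
    obtain ⟨hT, -, hmin⟩ := (isPrimitiveCollection_image_iff hpos hw).1 hA
    obtain ⟨k, hk⟩ : ∃ k, C k ⊆ T := by simpa [hC] using hT
    refine ⟨k, congrArg _ (Set.Subset.antisymm (fun i hi => ?_) hk)⟩
    by_contra hik
    exact (hC _).1 (hmin i hi) k (Set.subset_sdiff_singleton hk hik)
  · rintro ⟨k, rfl⟩
    refine (isPrimitiveCollection_image_iff hpos hw).2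
      ⟨fun h => (hC _).1 h k subset_rfl, hproper k, fun i hi => (hC _).2 fun l hl => ?_⟩
    obtain rfl := hanti l k (hl.trans Set.sdiff_subset)
    exact (hl hi).2 rfl

end PrimitiveCollections

theorem IsFacetOf.exists_isSupported [Finite ι] (hn : 2 ≤ n) (hpos : PositivelySpans w)
    {F : Set (Fin n → ℝ)} (hF : IsFacetOf F (convexHull ℝ (Set.range w))) :
    ∃ T : Finset ι, IsSupported w T ∧ F = convexHull ℝ (w '' T) ∧ n ≤ T.card := by
  classical
  have : NeZero n := ⟨by omega⟩
  obtain ⟨hface, hdim⟩ := hF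
  have hne : F.Nonempty := by
    rw [Set.nonempty_iff_ne_empty]
    rintro rfl
    rw [vectorSpan_empty, finrank_bot] at hdim
    omega
  have hproper : F ≠ convexHull ℝ (Set.range w) := by
    rintro rfl
    rw [← direction_affineSpan, affineSpan_convexHull, hpos.affineSpan_eq_top,
      AffineSubspace.direction_top, finrank_top, Module.finrank_fin_fun] at hdim
    omega
  obtain ⟨T, hT, rfl⟩ := hpos.exists_isSupported hface hne hproper
  lift T to Finset ι using T.toFinite
  refine ⟨T, hT, rfl, ?_⟩
  rw [convexHull_nonempty_iff, Set.image_nonempty, Finset.coe_nonempty] at hne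
  have hcard : T.card = T.card - 1 + 1 := (Nat.sub_add_cancel hne.card_pos).symm
  have hle := finrank_vectorSpan_image_finset_le ℝ w T hcard
  rw [Finset.coe_image, ← direction_affineSpan, ← affineSpan_convexHull,
    direction_affineSpan] at hle
  omega

theorem abs_det_eq_one_of_single_mem_span {w : Fin n → Fin n → ℝ}
    (hw : ∀ i, IsLatticePoint (w i))
    (h : ∀ q, Pi.single q 1 ∈ Submodule.span ℤ (Set.range w)) :
    |(Matrix.of w).det| = 1 := by
  choose A hA using hw
  choose C hC using fun q => (Submodule.mem_span_range_iff_exists_fun ℤ).1 (h q)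
  have hA' : Matrix.of w = (Matrix.of A).map (Int.castRingHom ℝ) := by
    ext i j
    simp [hA]
  have hmul : Matrix.of C * Matrix.of A = 1 := by
    apply Matrix.map_injective (Int.castRingHom ℝ).injective_int
    beta_reduce
    rw [Matrix.map_mul, ← hA']
    ext i j
    have hCij := congrFun (hC i) j
    rw [Finset.sum_apply, Pi.single_apply] at hCij
    simpa [Matrix.mul_apply, Matrix.one_apply, eq_comm (a := i)] using hCij
  have hdet : (Matrix.of C).det * (Matrix.of A).det = 1 := by
    rw [← Matrix.det_mul, hmul, Matrix.det_one]
  rw [hA', ← RingHom.mapMatrix_apply, ← RingHom.map_det, eq_intCast, ← Int.cast_abs,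
    Int.isUnit_iff_abs_eq.1 (.of_mul_eq_one_right _ hdet), Int.cast_one]

theorem isUnimodularBasis_image (hlat : ∀ i, IsLatticePoint (w i)) (hinj : Function.Injective w)
    {T : Finset ι} (hcard : T.card = n)
    (hspan : ∀ q, Pi.single q 1 ∈ Submodule.span ℤ (w '' T)) :
    IsUnimodularBasis (w '' T) := by
  let e := (T.equivFinOfCardEq hcard).symm
  have hrange : Set.range (fun q => w (e q)) = w '' T := by
    rw [← Function.comp_def (fun i : T => w i) e, e.surjective.range_comp, Set.image_eq_range]
    rfl
  exact ⟨fun q => w (e q), hinj.comp (Subtype.val_injective.comp e.injective), hrange,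
    fun q => hlat _, abs_det_eq_one_of_single_mem_span (fun q => hlat _) (hrange ▸ hspan)⟩

theorem isSmoothFano_convexHull_range [Finite ι] (hn : 2 ≤ n)
    (hlat : ∀ i, IsLatticePoint (w i)) (hpos : PositivelySpans w) (hw : ∀ i, IsSupported w {i})
    (hfacet : ∀ T : Finset ι, IsSupported w T → n ≤ T.card →
      T.card = n ∧ ∀ q, Pi.single q 1 ∈ Submodule.span ℤ (w '' T)) :
    IsSmoothFano (convexHull ℝ (Set.range w)) := by
  have : NeZero n := ⟨by omega⟩
  refine ⟨⟨⟨(Set.finite_range w).toFinset, by simpa using hlat, by simp⟩, ?_⟩,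
    hpos.zero_mem_interior, fun F hF => ?_⟩
  · rw [affineSpan_convexHull, hpos.affineSpan_eq_top]
  · obtain ⟨T, hT, rfl, hcard⟩ := hF.exists_isSupported hn hpos
    obtain ⟨hcard, hspan⟩ := hfacet T hT hcard
    rw [vertexSet, extremePoints_convexHull_range hw, range_inter_convexHull_image hw]
    exact isUnimodularBasis_image hlat (injective_of_isSupported_singleton hw) hcard hspan

end LatticePolytope

section Sums

variable {β M : Type*} [Fintype β]

theorem mem_of_sum_mem [AddCommGroup M] {N : AddSubgroup M} {f : β → M} (hs : ∑ i, f i ∈ N) {i₀ : β}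
    (h : ∀ i, i ≠ i₀ → f i ∈ N) : f i₀ ∈ N := by
  classical
  rw [← Finset.add_sum_erase _ _ (Finset.mem_univ i₀)] at hs
  exact (N.add_mem_cancel_right (N.sum_mem fun i hi => h i (Finset.ne_of_mem_erase hi))).1 hs

theorem exists_le_one_sum_eq_iff {𝕜 : Type*} [Field 𝕜] [LinearOrder 𝕜] [IsStrictOrderedRing 𝕜]
    {S : Set β} {σ : 𝕜} :
    (∃ p : β → 𝕜, (∀ i, p i ≤ 1 ∧ (p i = 1 ↔ i ∈ S)) ∧ ∑ i, p i = σ) ↔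
      σ ≤ Fintype.card β ∧ (σ = Fintype.card β ↔ S = Set.univ) := by
  classical
  have hcard : (Fintype.card β : 𝕜) = ∑ _i : β, 1 := by simp
  constructor
  · rintro ⟨p, hp, rfl⟩
    rw [hcard]
    refine ⟨Finset.sum_le_sum fun i _ => (hp i).1, ?_⟩
    rw [Finset.sum_eq_sum_iff_of_le fun i _ => (hp i).1]
    simp [hp, Set.eq_univ_iff_forall]
  · rintro ⟨hle, heq⟩
    obtain rfl | hS := eq_or_ne S Set.univ
    · exact ⟨1, by simp, by simpa using (heq.2 rfl).symm⟩
    have hlt : σ < Fintype.card β := hle.lt_of_ne (mt heq.1 hS)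
    have hm : (0 : 𝕜) < (Finset.univ.filter (· ∉ S)).card := by
      obtain ⟨i, hi⟩ := (Set.ne_univ_iff_exists_notMem S).1 hS
      exact_mod_cast Finset.card_pos.2 ⟨i, by simpa using hi⟩
    set δ : 𝕜 := (Fintype.card β - σ) / (Finset.univ.filter (· ∉ S)).card with hδ
    have hδpos : 0 < δ := div_pos (sub_pos.2 hlt) hm
    refine ⟨fun i => 1 - if i ∉ S then δ else 0, fun i => ?_, ?_⟩
    · by_cases hi : i ∈ S <;> simp [hi, hδpos.le, hδpos.ne']
    · rw [Finset.sum_sub_distrib, ← hcard, ← Finset.sum_filter, Finset.sum_const, nsmul_eq_mul, hδ,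
        mul_div_cancel₀ _ hm.ne', sub_sub_cancel]

end Sums

theorem sum_fin_ite_eq_add {R : Type*} [AddCommMonoidWithOne R] (m c x : ℕ) :
    ∑ i : Fin m, (if x = c + i.val then (1 : R) else 0) = if c ≤ x ∧ x < c + m then 1 else 0 := by
  split_ifs with h
  · rw [Finset.sum_eq_single (⟨x - c, by omega⟩ : Fin m)]
    · simp [h.1]
    · intro i _ hi
      rw [if_neg]
      contrapose! hi
      exact Fin.ext (by simp [hi])
    · simp
  · exact Finset.sum_eq_zero fun i _ => if_neg (by omega)

theorem le_and_eq_iff_iff {α : Type*} [PartialOrder α] {x c : α} {p : Prop} :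
    (x ≤ c ∧ (x = c ↔ p)) ↔ (p → x = c) ∧ (¬ p → x < c) := by
  by_cases hp : p
  · simpa [hp] using le_of_eq
  · simp [hp, lt_iff_le_and_ne]

theorem sum_eq_three_of_cyclic {c : Fin 5 → ℕ} (hc : ∀ k, ¬ (c k = 0 ∧ c (k + 1) = 0))
    (hsum : ∑ k, c k ≤ 3) :
    ∑ k, c k = 3 ∧ (∀ k, c k ≤ 1) ∧ ∃ k, c k = 0 ∧ c (k + 2) = 0 := by
  -- At most two of the `c k` vanish, so the other three are equal to one.
  simp only [Fin.forall_fin_succ, Fin.exists_fin_succ, Fin.sum_univ_five, Fin.isValue, zero_add,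
    Fin.succ_zero_eq_one, Fin.reduceAdd, Fin.succ_one_eq_two, Fin.reduceSucc, IsEmpty.forall_iff,
    IsEmpty.exists_iff, not_and, and_true, or_false] at *
  omega

namespace Pab

variable {a b : ℕ}

/-- The cyclically ordered blocks `v`, `y`, `z`, `t`, `u` of the vertices of `P(a,b)` are numbered
by `Fin 5`; this is the number of vertices in each block. -/
def blockSize (a b : ℕ) : Fin 5 → ℕ := ![a, b, 1, 1, b]

/-- Labels for the vertices of `P(a,b)`: a block together with a position in it. -/
abbrev Label (a b : ℕ) : Type := Σ k, Fin (blockSize a b k)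

/-- The labels in the `k`-th block. -/
def block (k : Fin 5) : Set (Label a b) := Sigma.fst ⁻¹' {k}

/-- The sum of a family over the `k`-th block. -/
def blockSum {M : Type*} [AddCommMonoid M] (f : Label a b → M) (k : Fin 5) : M := ∑ i, f ⟨k, i⟩

/-- The relations that the block sums of the vertices of `P(a,b)` satisfy; they are three of the
five primitive relations and imply the other two. -/
structure BlockRelations {M : Type*} [AddCommGroup M] (a b : ℕ) (s : Fin 5 → M) : Prop where
  v_add_y : s 0 + s 1 = ((a : ℤ) + b - 1) • s 3
  y_add_z : s 1 + s 2 = s 4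
  z_add_t : s 2 + s 3 = 0

/-- The shape of the label sets of the facets of `P(a,b)`: two nonadjacent blocks are contained in
`T`, and at most one label of every block is missing from `T`. -/
structure HasFacetShape (T : Set (Label a b)) : Prop where
  exists_block_subset : ∃ k, block k ⊆ T ∧ block (k + 2) ⊆ T
  injOn_compl : Set.InjOn Sigma.fst Tᶜ

theorem block_subset_iff {k : Fin 5} {T : Set (Label a b)} : block k ⊆ T ↔ ∀ i, ⟨k, i⟩ ∈ T := by
  refine ⟨fun h i => h rfl, ?_⟩
  rintro h ⟨_, i⟩ rfl
  exact h i

theorem blockSize_pos (ha : 1 ≤ a) (hb : 1 ≤ b) (k : Fin 5) : 0 < blockSize a b k := by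
  fin_cases k
  exacts [ha, hb, one_pos, one_pos, hb]

theorem card_label (ha : 1 ≤ a) : Fintype.card (Label a b) = a + 2 * b - 1 + 3 := by
  have hsum : ∑ k, blockSize a b k = a + b + 1 + 1 + b := Fin.sum_univ_five _
  rw [Fintype.card_sigma]
  simp only [Fintype.card_fin]
  omega

namespace BlockRelations

variable {M M' : Type*} [AddCommGroup M] [AddCommGroup M'] {s : Fin 5 → M}

theorem t_add_u (h : BlockRelations a b s) : s 3 + s 4 = s 1 := by
  rw [← h.y_add_z, add_left_comm, add_comm (s 3), h.z_add_t, add_zero]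

theorem u_add_v (h : BlockRelations a b s) : s 4 + s 0 = ((a : ℤ) + b - 2) • s 3 := by
  have hc : (a : ℤ) + b - 2 = a + b - 1 - 1 := by ring
  rw [hc, sub_one_zsmul, ← h.v_add_y, ← h.t_add_u]
  abel

theorem sub {s' : Fin 5 → M} (h : BlockRelations a b s) (h' : BlockRelations a b s') :
    BlockRelations a b (s - s') where
  v_add_y := by simp only [Pi.sub_apply, smul_sub, ← h.v_add_y, ← h'.v_add_y]; abel
  y_add_z := by simp only [Pi.sub_apply, ← h.y_add_z, ← h'.y_add_z]; abel
  z_add_t := by rw [Pi.sub_apply, Pi.sub_apply, sub_add_sub_comm, h.z_add_t, h'.z_add_t, sub_zero]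

theorem map (h : BlockRelations a b s) (f : M →+ M') : BlockRelations a b (f ∘ s) where
  v_add_y := by simp only [Function.comp_apply, ← map_add, ← map_zsmul, h.v_add_y]
  y_add_z := by simp only [Function.comp_apply, ← map_add, h.y_add_z]
  z_add_t := by simp only [Function.comp_apply, ← map_add, h.z_add_t, map_zero]

theorem mem_of_mem_of_mem (h : BlockRelations a b s) {N : AddSubgroup M} {k : Fin 5}
    (hk : s k ∈ N) (hk' : s (k + 2) ∈ N) (j : Fin 5) : s j ∈ N := by
  have hv : s 0 = ((a : ℤ) + b - 1) • s 3 - s 1 := eq_sub_of_add_eq h.v_add_y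
  have hy : s 1 = ((a : ℤ) + b - 1) • s 3 - s 0 := eq_sub_of_add_eq' h.v_add_y
  have hz : s 2 = -s 3 := eq_neg_of_add_eq_zero_left h.z_add_t
  have hu : s 4 = s 1 - s 3 := by rw [← h.y_add_z, hz, sub_eq_add_neg]
  suffices hyt : s 1 ∈ N ∧ s 3 ∈ N by
    obtain ⟨hy, ht⟩ := hyt
    fin_cases j
    exacts [hv ▸ N.sub_mem (N.zsmul_mem ht _) hy, hy, hz ▸ N.neg_mem ht, ht, hu ▸ N.sub_mem hy ht]
  fin_cases k
  · have ht : s 3 ∈ N := neg_mem_iff.1 (hz ▸ hk')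
    exact ⟨hy ▸ N.sub_mem (N.zsmul_mem ht _) hk, ht⟩
  · exact ⟨hk, hk'⟩
  · have ht : s 3 ∈ N := neg_mem_iff.1 (hz ▸ hk)
    exact ⟨h.t_add_u ▸ N.add_mem ht hk', ht⟩
  · exact ⟨hy ▸ N.sub_mem (N.zsmul_mem hk _) hk', hk⟩
  · exact ⟨hk', eq_sub_of_add_eq h.t_add_u ▸ N.sub_mem hk' hk⟩

end BlockRelations

theorem HasFacetShape.mem_of_forall_mem {M : Type*} [AddCommGroup M] {T : Set (Label a b)}
    (hT : HasFacetShape T) {f : Label a b → M} (hf : BlockRelations a b (blockSum f))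
    {N : AddSubgroup M} (hN : ∀ i ∈ T, f i ∈ N) (i : Label a b) : f i ∈ N := by
  obtain ⟨k, hk, hk'⟩ := hT.exists_block_subset
  have hblock {k : Fin 5} (hk : block k ⊆ T) : blockSum f k ∈ N :=
    N.sum_mem fun i _ => hN _ (block_subset_iff.1 hk i)
  have hsum := hf.mem_of_mem_of_mem (hblock hk) (hblock hk') i.1
  by_contra hi
  have hiT : i ∉ T := fun h => hi (hN i h)
  refine hi (mem_of_sum_mem (f := fun j => f ⟨i.1, j⟩) hsum (i₀ := i.2) fun j hj => hN _ ?_)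
  by_contra hjT
  exact hj (by simpa [Sigma.ext_iff] using hT.injOn_compl hjT hiT rfl)

theorem hasFacetShape_of_card_le (ha : 1 ≤ a) {T : Finset (Label a b)}
    (hT : ∀ k, ¬ block k ∪ block (k + 1) ⊆ (T : Set (Label a b))) (hcard : a + 2 * b - 1 ≤ T.card) :
    T.card = a + 2 * b - 1 ∧ HasFacetShape (T : Set (Label a b)) := by
  let missing (k : Fin 5) : Finset (Label a b) := Tᶜ.filter (·.1 = k)
  have hmissing (k : Fin 5) : (missing k).card = 0 ↔ block k ⊆ (T : Set (Label a b)) := by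
    rw [Finset.card_eq_zero, Finset.filter_eq_empty_iff]
    exact ⟨fun h i hi => by_contra fun hiT => h (Finset.mem_compl.2 hiT) hi,
      fun h i hi hik => Finset.mem_compl.1 hi (h hik)⟩
  have hsum : ∑ k, (missing k).card = Tᶜ.card :=
    (Finset.card_eq_sum_card_fiberwise fun _ _ => Finset.mem_coe.2 (Finset.mem_univ _)).symm
  have hcompl := Finset.card_compl_add_card T
  rw [card_label ha] at hcompl
  obtain ⟨heq, hle, k, hk⟩ := sum_eq_three_of_cyclic (c := fun k => (missing k).card)
    (fun k hk => hT k (Set.union_subset ((hmissing k).1 hk.1) ((hmissing (k + 1)).1 hk.2)))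
    (by omega)
  refine ⟨by omega, ⟨k, (hmissing k).1 hk.1, (hmissing (k + 2)).1 hk.2⟩, fun i hi j hj hij => ?_⟩
  exact Finset.card_le_one.1 (hle j.1) i (by simpa [missing, hij] using hi) j
    (by simpa [missing] using hj)

theorem exists_finset_hasFacetShape (ha : 1 ≤ a) (hb : 1 ≤ b) :
    ∃ T : Finset (Label a b), T.card = a + 2 * b - 1 ∧ HasFacetShape (T : Set (Label a b)) := by
  let missing (k : Fin 5) : Label a b := ⟨k, 0, blockSize_pos ha hb k⟩
  have hinj : Function.Injective missing := fun k l h => congrArg Sigma.fst h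
  refine ⟨(Finset.image missing {0, 2, 4})ᶜ, ?_, ⟨1, ?_, ?_⟩, ?_⟩
  · rw [Finset.card_compl, card_label ha, Finset.card_image_of_injective _ hinj]
    rfl
  · rintro ⟨_, i⟩ rfl
    simp [missing, Sigma.ext_iff]
  · rintro ⟨_, i⟩ rfl
    simp [missing, Sigma.ext_iff]
  · rw [Finset.coe_compl, compl_compl, Finset.coe_image]
    exact fun i hi j hj hij => by
      obtain ⟨k, -, rfl⟩ := hi
      obtain ⟨l, -, rfl⟩ := hj
      exact congrArg missing hij

theorem exists_pentagon_point {𝕜 : Type*} [Field 𝕜] [LinearOrder 𝕜] [IsStrictOrderedRing 𝕜]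
    {a b : 𝕜} (ha : 1 ≤ a) (hb : 1 ≤ b) {V Y Z T U : Prop}
    (hVY : ¬ (V ∧ Y)) (hYZ : ¬ (Y ∧ Z)) (hZT : ¬ (Z ∧ T)) (hTU : ¬ (T ∧ U)) (hUV : ¬ (U ∧ V)) :
    ∃ τ σ : 𝕜,
      ((a + b - 1) * τ - σ ≤ a ∧ ((a + b - 1) * τ - σ = a ↔ V)) ∧
      (σ ≤ b ∧ (σ = b ↔ Y)) ∧
      (-τ ≤ 1 ∧ (-τ = 1 ↔ Z)) ∧
      (τ ≤ 1 ∧ (τ = 1 ↔ T)) ∧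
      (σ - τ ≤ b ∧ (σ - τ = b ↔ U)) := by
  simp only [le_and_eq_iff_iff]
  -- The witnesses are the vertices of the pentagon, points inside its edges, and an inner point.
  by_cases hV : V <;> by_cases hY : Y <;> by_cases hZ : Z <;> by_cases hT : T <;>
    by_cases hU : U <;> simp only [hV, hY, hZ, hT, hU, and_true, true_and, not_true_eq_false,
      not_false_eq_true, and_false, forall_const, IsEmpty.forall_iff, and_self] at *
  · exact ⟨-1, -2 * a - b + 1, by and_intros <;> linarith⟩
  · exact ⟨1, b - 1, by and_intros <;> linarith⟩
  · exact ⟨0, -a, by and_intros <;> linarith⟩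
  · exact ⟨1, b, by and_intros <;> linarith⟩
  · exact ⟨0, b, by and_intros <;> linarith⟩
  · exact ⟨1 / 2, b, by and_intros <;> linarith⟩
  · exact ⟨-1, b - 1, by and_intros <;> linarith⟩
  · exact ⟨-1, -1, by and_intros <;> linarith⟩
  · exact ⟨1, b - 1 / 2, by and_intros <;> linarith⟩
  · exact ⟨-1 / 2, b - 1 / 2, by and_intros <;> linarith⟩
  · exact ⟨0, 0, by and_intros <;> linarith⟩

theorem exists_blockRelations_iff (ha : 1 ≤ a) (hb : 1 ≤ b) {S : Set (Fin 5)} :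
    (∃ s : Fin 5 → ℝ, BlockRelations a b s ∧
      ∀ k, s k ≤ blockSize a b k ∧ (s k = blockSize a b k ↔ k ∈ S)) ↔
      ∀ k, ¬ (k ∈ S ∧ k + 1 ∈ S) := by
  have ha' : (1 : ℝ) ≤ a := by exact_mod_cast ha
  have hb' : (1 : ℝ) ≤ b := by exact_mod_cast hb
  constructor
  · rintro ⟨s, hs, hle⟩ k ⟨hk, hk'⟩
    have hvy : s 0 + s 1 = (a + b - 1) * s 3 := by simpa using hs.v_add_y
    have hyz := hs.y_add_z
    have hzt := hs.z_add_t
    have hv : s 0 ≤ a ∧ (s 0 = a ↔ 0 ∈ S) := hle 0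
    have hy : s 1 ≤ b ∧ (s 1 = b ↔ 1 ∈ S) := hle 1
    have hz : s 2 ≤ 1 ∧ (s 2 = 1 ↔ 2 ∈ S) := by simpa [blockSize] using hle 2
    have ht : s 3 ≤ 1 ∧ (s 3 = 1 ↔ 3 ∈ S) := by simpa [blockSize] using hle 3
    have hu : s 4 ≤ b ∧ (s 4 = b ↔ 4 ∈ S) := hle 4
    fin_cases k
    · nlinarith [hv.2.2 hk, hy.2.2 hk']
    · linarith [hy.2.2 hk, hz.2.2 hk']
    · linarith [hz.2.2 hk, ht.2.2 hk']
    · linarith [ht.2.2 hk, hu.2.2 hk']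
    · nlinarith [hu.2.2 hk, hv.2.2 hk']
  · intro h
    obtain ⟨τ, σ, hτσ⟩ := exists_pentagon_point ha' hb' (h 0) (h 1) (h 2) (h 3) (h 4)
    refine ⟨![(a + b - 1) * τ - σ, σ, -τ, τ, σ - τ],
      ⟨by simp, by simp [sub_eq_add_neg], by simp⟩, ?_⟩
    simpa [Fin.forall_fin_succ, blockSize] using hτσ

/-- The vertex of `P(a,b)` with a given label. -/
def vertex (a b : ℕ) : Label a b → Fin (a + 2 * b - 1) → ℝ
  | ⟨0, i⟩ => v a b i
  | ⟨1, j⟩ => y a b j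
  | ⟨2, _⟩ => z a b
  | ⟨3, _⟩ => t a b
  | ⟨4, j⟩ => u a b j

theorem image_vertex_block (k : Fin 5) :
    vertex a b '' block k =
      ![Set.range (v a b), Set.range (y a b), {z a b}, {t a b}, Set.range (u a b)] k := by
  have h : vertex a b '' block k = Set.range fun i => vertex a b ⟨k, i⟩ := by
    rw [block, ← Set.range_sigmaMk, ← Set.range_comp]
    rfl
  rw [h]
  fin_cases k
  exacts [rfl, rfl, Set.range_const (ι := Fin 1), Set.range_const (ι := Fin 1), rfl]

theorem range_vertex : Set.range (vertex a b) =
    Set.range (v a b) ∪ Set.range (y a b) ∪ {z a b, t a b} ∪ Set.range (u a b) := by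
  have h : (Set.univ : Set (Label a b)) = ⋃ k, block k :=
    (Set.iUnion_eq_univ_iff.2 fun i => ⟨i.1, rfl⟩).symm
  rw [← Set.image_univ, h, Set.image_iUnion]
  ext x
  simp [image_vertex_block, Fin.exists_fin_succ, or_assoc, or_left_comm]

theorem P_eq_convexHull_range_vertex : P a b = convexHull ℝ (Set.range (vertex a b)) := by
  rw [range_vertex, P]

theorem isLatticePoint_vertex (i : Label a b) : IsLatticePoint (vertex a b i) := by
  intro q
  match i with
  | ⟨0, i⟩ =>
    simp only [vertex, v, ite_apply]
    split_ifs
    exacts [⟨1, by simp⟩, ⟨0, by simp⟩, ⟨(a + b - 1 : ℕ), by simp⟩, ⟨-1, by simp⟩]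
  | ⟨1, j⟩ =>
    simp only [vertex, y, ite_apply]
    split_ifs
    exacts [⟨1, by simp⟩, ⟨0, by simp⟩, ⟨1, by simp⟩, ⟨0, by simp⟩]
  | ⟨2, _⟩ =>
    simp only [vertex, z]
    split_ifs
    exacts [⟨-1, by simp⟩, ⟨0, by simp⟩]
  | ⟨3, _⟩ =>
    simp only [vertex, t]
    split_ifs
    exacts [⟨1, by simp⟩, ⟨0, by simp⟩]
  | ⟨4, j⟩ =>
    simp only [vertex, u, ite_apply]
    split_ifs
    exacts [⟨1, by simp⟩, ⟨0, by simp⟩, ⟨1, by simp⟩, ⟨-1, by simp⟩, ⟨0, by simp⟩]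

theorem sum_v_apply (ha : 1 ≤ a) (hb : 1 ≤ b) (q : Fin (a + 2 * b - 1)) :
    ∑ i, v a b i q = if q.val < a - 1 then 0
      else if q.val = a + 2 * b - 2 then ((a + b - 1 : ℕ) : ℝ) else -1 := by
  obtain ⟨a, rfl⟩ : ∃ a', a = a' + 1 := ⟨a - 1, by omega⟩
  have h := sum_fin_ite_eq_add (R := ℝ) a 0 q.val
  simp only [zero_add] at h
  rw [Fin.sum_univ_castSucc]
  simp only [v, Fin.val_castSucc, Fin.val_last, add_tsub_cancel_right, Fin.is_lt, if_true,
    lt_irrefl, if_false, h]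
  split_ifs <;> first | omega | simp

theorem sum_y_apply (ha : 1 ≤ a) (hb : 1 ≤ b) (q : Fin (a + 2 * b - 1)) :
    ∑ j, y a b j q = if a - 1 ≤ q.val ∧ q.val ≤ a + 2 * b - 3 then 1 else 0 := by
  obtain ⟨b, rfl⟩ : ∃ b', b = b' + 1 := ⟨b - 1, by omega⟩
  have h := sum_fin_ite_eq_add (R := ℝ) b (a - 1) q.val
  rw [Fin.sum_univ_castSucc]
  simp only [y, Fin.val_castSucc, Fin.val_last, add_tsub_cancel_right, Fin.is_lt, if_true,
    lt_irrefl, if_false, h]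
  split_ifs <;> first | omega | simp

theorem sum_u_apply (hb : 1 ≤ b) (q : Fin (a + 2 * b - 1)) :
    ∑ j, u a b j q = if a - 1 ≤ q.val ∧ q.val ≤ a + 2 * b - 3 then 1
      else if q.val = a + 2 * b - 2 then -1 else 0 := by
  obtain ⟨b, rfl⟩ : ∃ b', b = b' + 1 := ⟨b - 1, by omega⟩
  have h := sum_fin_ite_eq_add (R := ℝ) b (a + (b + 1) - 1) q.val
  rw [Fin.sum_univ_castSucc]
  simp only [u, Fin.val_castSucc, Fin.val_last, add_tsub_cancel_right, Fin.is_lt, if_true,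
    lt_irrefl, if_false, h]
  split_ifs <;> first | omega | simp

theorem blockRelations_vertex (ha : 1 ≤ a) (hb : 1 ≤ b) :
    BlockRelations a b (blockSum (vertex a b)) where
  v_add_y := by
    change ∑ i, v a b i + ∑ j, y a b j = ((a : ℤ) + b - 1) • ∑ _i : Fin 1, t a b
    have hcast : ((a + b - 1 : ℕ) : ℝ) = a + b - 1 := by
      rw [Nat.cast_pred (by omega), Nat.cast_add]
    ext q
    simp only [Pi.add_apply, Finset.sum_apply, sum_v_apply ha hb, hcast, sum_y_apply ha hb,
      Pi.smul_apply, t, Fin.sum_univ_one]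
    split_ifs <;> first | omega | simp
  y_add_z := by
    change ∑ j, y a b j + ∑ _i : Fin 1, z a b = ∑ j, u a b j
    ext q
    simp only [Pi.add_apply, Finset.sum_apply, sum_u_apply hb, sum_y_apply ha hb, z,
      Fin.sum_univ_one]
    split_ifs <;> first | omega | simp
  z_add_t := by
    change ∑ _i : Fin 1, z a b + ∑ _i : Fin 1, t a b = 0
    ext q
    simp only [Fin.sum_univ_one, Pi.add_apply, z, t, Pi.zero_apply]
    split_ifs <;> simp

theorem single_mem_of_forall_vertex_mem (ha : 1 ≤ a) (hb : 1 ≤ b)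
    {N : AddSubgroup (Fin (a + 2 * b - 1) → ℝ)} (hN : ∀ i, vertex a b i ∈ N)
    (q : Fin (a + 2 * b - 1)) : Pi.single q 1 ∈ N := by
  have hv (i : Fin a) : v a b i ∈ N := hN ⟨0, i⟩
  have hy (j : Fin b) : y a b j ∈ N := hN ⟨1, j⟩
  have ht : t a b ∈ N := hN ⟨3, (0 : Fin 1)⟩
  have hu (j : Fin b) : u a b j ∈ N := hN ⟨4, j⟩
  have hq := q.isLt
  rcases lt_or_ge q.val (a - 1) with hqv | hqv
  · convert hv ⟨q, by omega⟩ using 1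
    ext r
    simp [v, hqv, Pi.single_apply, Fin.ext_iff]
  rcases lt_or_ge q.val (a + b - 2) with hqy | hqy
  · convert hy ⟨q - (a - 1), by omega⟩ using 1
    ext r
    have hlt : q.val - (a - 1) < b - 1 := by omega
    simp [y, hlt, hqv, Pi.single_apply, Fin.ext_iff]
  rcases hqy.eq_or_lt with hqyu | hqyu
  · let last : Fin b := ⟨b - 1, by omega⟩
    have hsum : ∑ j, u a b j ∈ N := N.sum_mem fun j _ => hu j
    convert N.add_mem (N.sub_mem (hy last) hsum) (hu last) using 1
    ext r
    rw [Pi.add_apply, Pi.sub_apply, Finset.sum_apply, sum_u_apply hb]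
    simp only [Pi.single_apply, Fin.ext_iff, y, u, last, lt_irrefl, if_false]
    split_ifs <;> first | omega | simp
  rcases lt_or_ge q.val (a + 2 * b - 2) with hqu | hqt
  · convert hu ⟨q - (a + b - 1), by omega⟩ using 1
    ext r
    have hlt : q.val - (a + b - 1) < b - 1 := by omega
    have hadd : a + b - 1 + (q.val - (a + b - 1)) = q.val := by omega
    simp [u, hlt, hadd, Pi.single_apply, Fin.ext_iff]
  · convert ht using 1
    ext r
    have hlast : q.val = a + 2 * b - 2 := by omega
    simp [t, hlast, Pi.single_apply, Fin.ext_iff]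

theorem HasFacetShape.single_mem_of_forall_mem (ha : 1 ≤ a) (hb : 1 ≤ b) {T : Set (Label a b)}
    (hT : HasFacetShape T) {N : AddSubgroup (Fin (a + 2 * b - 1) → ℝ)}
    (hN : ∀ i ∈ T, vertex a b i ∈ N) (q : Fin (a + 2 * b - 1)) : Pi.single q 1 ∈ N :=
  single_mem_of_forall_vertex_mem ha hb (hT.mem_of_forall_mem (blockRelations_vertex ha hb) hN) q

theorem HasFacetShape.span_eq_top (ha : 1 ≤ a) (hb : 1 ≤ b) {T : Set (Label a b)}
    (hT : HasFacetShape T) : Submodule.span ℝ (vertex a b '' T) = ⊤ := by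
  refine (Submodule.eq_top_iff_forall_basis_mem (Pi.basisFun ℝ _)).2 fun q => ?_
  rw [Pi.basisFun_apply]
  exact hT.single_mem_of_forall_mem ha hb
    (N := (Submodule.span ℝ (vertex a b '' T)).toAddSubgroup)
    (fun i hi => Submodule.subset_span ⟨i, hi, rfl⟩) q

theorem blockSum_comp_vertex {M : Type*} [AddCommGroup M] (f : (Fin (a + 2 * b - 1) → ℝ) →+ M) :
    blockSum (f ∘ vertex a b) = f ∘ blockSum (vertex a b) :=
  funext fun _ => (map_sum f _ _).symm

theorem exists_strongDual_vertex_eq_iff (ha : 1 ≤ a) (hb : 1 ≤ b) {p : Label a b → ℝ} :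
    (∃ l : StrongDual ℝ (Fin (a + 2 * b - 1) → ℝ), ∀ i, l (vertex a b i) = p i) ↔
      BlockRelations a b (blockSum p) := by
  constructor
  · rintro ⟨l, hl⟩
    obtain rfl : l ∘ vertex a b = p := funext hl
    have h := (blockRelations_vertex ha hb).map l.toLinearMap.toAddMonoidHom
    rwa [← blockSum_comp_vertex] at h
  · intro hp
    obtain ⟨T, hcard, hT⟩ := exists_finset_hasFacetShape ha hb
    let B := basisOfTopLeSpanOfCardEqFinrank (fun i : T => vertex a b i)
      (by rw [← hT.span_eq_top ha hb, Set.image_eq_range]; rfl) (by simp [hcard])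
    let l := (B.constr ℝ fun i => p i).toContinuousLinearMap
    refine ⟨l, fun i => sub_eq_zero.1 ?_⟩
    have hrel : BlockRelations a b (blockSum fun i => l (vertex a b i) - p i) := by
      have h := ((blockRelations_vertex ha hb).map l.toLinearMap.toAddMonoidHom).sub hp
      rw [← blockSum_comp_vertex] at h
      convert h using 1
      exact funext fun _ => Finset.sum_sub_distrib ..
    refine AddSubgroup.mem_bot.1 (hT.mem_of_forall_mem hrel (fun i hi => ?_) i)
    have hB : B ⟨i, hi⟩ = vertex a b i := by simp [B]
    simp [l, ← hB]

theorem isSupported_vertex_iff (ha : 1 ≤ a) (hb : 1 ≤ b) {T : Set (Label a b)} :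
    IsSupported (vertex a b) T ↔ ∀ k, ¬ block k ∪ block (k + 1) ⊆ T := by
  calc IsSupported (vertex a b) T
      ↔ ∃ p : Label a b → ℝ, BlockRelations a b (blockSum p) ∧
          ∀ i, p i ≤ 1 ∧ (p i = 1 ↔ i ∈ T) := by
        simp only [← exists_strongDual_vertex_eq_iff ha hb, IsSupported]
        exact ⟨fun ⟨l, hl⟩ => ⟨_, ⟨l, fun _ => rfl⟩, hl⟩,
          fun ⟨p, ⟨l, hlp⟩, hp⟩ => ⟨l, by simpa only [hlp] using hp⟩⟩
    _ ↔ ∃ s : Fin 5 → ℝ, BlockRelations a b s ∧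
          ∀ k, s k ≤ blockSize a b k ∧ (s k = blockSize a b k ↔ k ∈ {k | block k ⊆ T}) := by
        have hfiber (k : Fin 5) (σ : ℝ) := exists_le_one_sum_eq_iff (S := Sigma.mk k ⁻¹' T) (σ := σ)
        simp only [Fintype.card_fin, Set.eq_univ_iff_forall, Set.mem_preimage,
          ← block_subset_iff] at hfiber
        constructor
        · rintro ⟨p, hrel, hp⟩
          exact ⟨_, hrel, fun k => (hfiber k _).1 ⟨_, fun i => hp ⟨k, i⟩, rfl⟩⟩
        · rintro ⟨s, hrel, hs⟩
          choose p hp hsum using fun k => (hfiber k _).2 (hs k)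
          have hblock : blockSum (fun i : Label a b => p i.1 i.2) = s := funext hsum
          exact ⟨fun i => p i.1 i.2, by rwa [hblock], fun i => hp i.1 i.2⟩
    _ ↔ ∀ k, ¬ block k ∪ block (k + 1) ⊆ T := by
        rw [exists_blockRelations_iff ha hb]
        simp only [Set.mem_ofPred_eq, Set.union_subset_iff]

theorem positivelySpans_vertex (ha : 1 ≤ a) (hb : 1 ≤ b) : PositivelySpans (vertex a b) := by
  have ha' : (1 : ℝ) ≤ a := by exact_mod_cast ha
  have hb' : (1 : ℝ) ≤ b := by exact_mod_cast hb
  let c : Fin 5 → ℝ := ![2, 1, 2 * a + 2 * b - 2, 1, 1]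
  have hc (k : Fin 5) : 0 < c k := by
    fin_cases k
    exacts [two_pos, one_pos, show 0 < 2 * (a : ℝ) + 2 * b - 2 by linarith, one_pos, one_pos]
  have hsum : ∑ i : Label a b, c i.1 • vertex a b i = 0 := by
    have hrel := blockRelations_vertex ha hb
    have hv : blockSum (vertex a b) 0 =
        ((a : ℝ) + b - 1) • blockSum (vertex a b) 3 - blockSum (vertex a b) 1 :=
      eq_sub_of_add_eq (by simpa [← Int.cast_smul_eq_zsmul ℝ] using hrel.v_add_y)
    calc ∑ i : Label a b, c i.1 • vertex a b i
        = ∑ k, c k • blockSum (vertex a b) k := by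
          simp only [Fintype.sum_sigma, blockSum, Finset.smul_sum]
      _ = 0 := by
          rw [Fin.sum_univ_five, hv, eq_neg_of_add_eq_zero_left hrel.z_add_t,
            eq_sub_of_add_eq' hrel.t_add_u]
          simp only [c, Matrix.cons_val]
          module
  refine positivelySpans_of_sum_smul_eq_zero (fun i => hc i.1) hsum ?_
  obtain ⟨T, -, hT⟩ := exists_finset_hasFacetShape ha hb
  exact top_unique (hT.span_eq_top ha hb ▸ Submodule.span_mono (Set.image_subset_range ..))

theorem block_subset_union_iff (ha : 1 ≤ a) (hb : 1 ≤ b) {k l m : Fin 5} :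
    (block k : Set (Label a b)) ⊆ block l ∪ block m ↔ k = l ∨ k = m := by
  rw [block_subset_iff]
  exact ⟨fun h => h ⟨0, blockSize_pos ha hb k⟩, fun h _ => h⟩

theorem isSupported_vertex_singleton (ha : 1 ≤ a) (hb : 1 ≤ b) (i : Label a b) :
    IsSupported (vertex a b) {i} := by
  have hfst {l : Fin 5} (hl : block l ⊆ ({i} : Set (Label a b))) : l = i.1 :=
    congrArg Sigma.fst (block_subset_iff.1 hl ⟨0, blockSize_pos ha hb l⟩)
  refine (isSupported_vertex_iff ha hb).2 fun k h => ?_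
  obtain ⟨hk, hk'⟩ := Set.union_subset_iff.1 h
  exact add_ne_left.2 one_ne_zero ((hfst hk').trans (hfst hk).symm)

theorem eq_of_block_union_subset (ha : 1 ≤ a) (hb : 1 ≤ b) {k l : Fin 5}
    (h : (block k ∪ block (k + 1) : Set (Label a b)) ⊆ block l ∪ block (l + 1)) : k = l := by
  rw [Set.union_subset_iff, block_subset_union_iff ha hb, block_subset_union_iff ha hb] at h
  decide +revert

theorem block_union_ne_univ (ha : 1 ≤ a) (hb : 1 ≤ b) (k : Fin 5) :
    (block k ∪ block (k + 1) : Set (Label a b)) ≠ Set.univ := by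
  have hk : ¬ (k + 2 = k ∨ k + 2 = k + 1) := by decide +revert
  exact fun h => hk ((block_subset_union_iff ha hb).1 (h ▸ Set.subset_univ _))

theorem isSmoothFano_P (ha : 1 ≤ a) (hb : 1 ≤ b) : IsSmoothFano (P a b) := by
  rw [P_eq_convexHull_range_vertex]
  refine isSmoothFano_convexHull_range (by omega) isLatticePoint_vertex
    (positivelySpans_vertex ha hb) (isSupported_vertex_singleton ha hb) fun T hT hcard => ?_
  obtain ⟨hcard, hshape⟩ := hasFacetShape_of_card_le ha ((isSupported_vertex_iff ha hb).1 hT) hcard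
  exact ⟨hcard, hshape.single_mem_of_forall_mem ha hb
    (N := (Submodule.span ℤ (vertex a b '' T)).toAddSubgroup)
    fun i hi => Submodule.subset_span ⟨i, hi, rfl⟩⟩

theorem vertexSet_P (ha : 1 ≤ a) (hb : 1 ≤ b) : vertexSet (P a b) = Set.range (vertex a b) := by
  rw [P_eq_convexHull_range_vertex, vertexSet,
    extremePoints_convexHull_range (isSupported_vertex_singleton ha hb)]

theorem ncard_vertexSet_P (ha : 1 ≤ a) (hb : 1 ≤ b) :
    (vertexSet (P a b)).ncard = a + 2 * b - 1 + 3 := by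
  rw [vertexSet_P ha hb, Set.ncard_range_of_injective, Nat.card_eq_fintype_card, card_label ha]
  exact injective_of_isSupported_singleton (isSupported_vertex_singleton ha hb)

theorem isPrimitiveCollection_P_iff (ha : 1 ≤ a) (hb : 1 ≤ b) {A : Set (Fin (a + 2 * b - 1) → ℝ)} :
    IsPrimitiveCollection (P a b) A ↔
      A = Set.range (v a b) ∪ Set.range (y a b) ∨ A = Set.range (y a b) ∪ {z a b} ∨
      A = {z a b, t a b} ∨ A = insert (t a b) (Set.range (u a b)) ∨
      A = Set.range (u a b) ∪ Set.range (v a b) := by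
  rw [P_eq_convexHull_range_vertex, isPrimitiveCollection_iff (positivelySpans_vertex ha hb)
    (isSupported_vertex_singleton ha hb) (fun _ => isSupported_vertex_iff ha hb)
    (fun _ _ => eq_of_block_union_subset ha hb) (block_union_ne_univ ha hb)]
  simp [Set.image_union, image_vertex_block, Fin.exists_fin_succ, Set.pair_comm (z a b)]

theorem hasIsolatedStructure_P (ha : 1 ≤ a) (hb : 1 ≤ b) :
    HasIsolatedStructure (P a b) a b (v a b) (y a b) (z a b) (t a b) (u a b) := by
  have hrel := blockRelations_vertex ha hb
  have hz : blockSum (vertex a b) 2 = z a b := Fin.sum_univ_one _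
  have ht : blockSum (vertex a b) 3 = t a b := Fin.sum_univ_one _
  refine ⟨(vertexSet_P ha hb).trans range_vertex, fun _ => isPrimitiveCollection_P_iff ha hb,
    ?_, hz ▸ hrel.y_add_z, hz ▸ ht ▸ hrel.z_add_t, ht ▸ hrel.t_add_u, ?_⟩
  · have h := hrel.v_add_y
    rw [ht, ← Int.cast_smul_eq_zsmul ℝ] at h
    push_cast at h
    exact h
  · have h := hrel.u_add_v
    rw [ht, ← Int.cast_smul_eq_zsmul ℝ] at h
    push_cast at h
    exact h

end Pab

theorem Pab_isSmoothFano_with_primitive_relations_general (a b : ℕ) (ha : 1 ≤ a) (hb : 1 ≤ b) :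
    IsSmoothFano (Pab.P a b) ∧
    (vertexSet (Pab.P a b)).ncard = (a + 2 * b - 1) + 3 ∧
    HasIsolatedStructure (Pab.P a b) a b
      (Pab.v a b) (Pab.y a b) (Pab.z a b) (Pab.t a b) (Pab.u a b) :=
  ⟨Pab.isSmoothFano_P ha hb, Pab.ncard_vertexSet_P ha hb, Pab.hasIsolatedStructure_P ha hb⟩

/-- For `a, b ≥ 2`, the polytope `P(a,b)` is a smooth Fano
polytope of dimension `n = a + 2b - 1` with `n + 3` vertices
`v_1, …, v_a, y_1, …, y_b, z, t, u_1, …, u_b`, and its primitive relations are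
exactly the five relations of Theorem `pic3cha`. -/
theorem Pab_isSmoothFano_with_primitive_relations (a b : ℕ) (ha : 2 ≤ a) (hb : 2 ≤ b) :
    IsSmoothFano (Pab.P a b) ∧
    (vertexSet (Pab.P a b)).ncard = (a + 2 * b - 1) + 3 ∧
    HasIsolatedStructure (Pab.P a b) a b
      (Pab.v a b) (Pab.y a b) (Pab.z a b) (Pab.t a b) (Pab.u a b) :=
  Pab_isSmoothFano_with_primitive_relations_general a b (one_le_two.trans ha) (one_le_two.trans hb)
end
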